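/- arXiv:2004.13135 — 3 statements merged into one kernel-verified Lean document; each statement's English description precedes it below -/
import Mathlib

section
/- Let χ(μ) = Ψ_λ(ρ_κ(ζ)) where μ = (κ, λ), λ = (C, d) ranges over {λ : ‖λ‖ < D} and Ψ_λ(x) = ψ(Cx + d). Assume κ ↦ ρ_κ(ζ) is Lipschitz with constant L₁, κ ↦ ∇ρ_κ(ζ) is Lipschitz with constant L₂, ‖ρ_κ(ζ)‖ ≤ B₁ and ‖∇ρ_κ(ζ)‖ ≤ B₂ for all κ. Then the full gradient ∇χ (with respect to μ = (κ, λ)) is Lipschitz continuous with constant √(m₁ + m₂), where m₁ = max{ 3L₁²(c₁²n₃ + c₂²D²B₁²) + 2c₂²D²L₁² , c₂²(B₁² + 1)(3B₁² + 2) } and m₂ = (n₃c₁DL₂ + B₂c₂D²L₁)² + B₂²(n₃c₁ + Dc₂(B₁² + 1)^{1/2})². -/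
open scoped BigOperators

/-- Frobenius-type norm of a vector. -/
noncomputable def vnorm {n : ℕ} (v : Fin n → ℝ) : ℝ := Real.sqrt (∑ i, (v i) ^ 2)

/-- Frobenius-type norm of a matrix. -/
noncomputable def mnorm {m n : ℕ} (A : Fin m → Fin n → ℝ) : ℝ :=
  Real.sqrt (∑ i, ∑ j, (A i j) ^ 2)

/-- Pre-activation C_{i,·}·ρ_κ(ζ) + d_i. -/
noncomputable def preact {n₁ n₂ n₃ l₁ : ℕ}
    (ρ : (Fin l₁ → ℝ) → (Fin n₁ → ℝ) → Fin n₂ → ℝ) (ζ : Fin n₁ → ℝ)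
    (κ : Fin l₁ → ℝ) (C : Fin n₃ → Fin n₂ → ℝ) (d : Fin n₃ → ℝ) (i : Fin n₃) : ℝ :=
  ∑ j, C i j * ρ κ ζ j + d i

/-- Partial derivatives of χ with respect to the entries of C. -/
noncomputable def gradChiC {n₁ n₂ n₃ l₁ : ℕ} (ψ : ℝ → ℝ)
    (ρ : (Fin l₁ → ℝ) → (Fin n₁ → ℝ) → Fin n₂ → ℝ) (ζ : Fin n₁ → ℝ)
    (κ : Fin l₁ → ℝ) (C : Fin n₃ → Fin n₂ → ℝ) (d : Fin n₃ → ℝ) :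
    Fin n₃ → Fin n₃ → Fin n₂ → ℝ :=
  fun k i j => if k = i then deriv ψ (preact ρ ζ κ C d i) * ρ κ ζ j else 0

/-- Partial derivatives of χ with respect to the entries of d. -/
noncomputable def gradChiD {n₁ n₂ n₃ l₁ : ℕ} (ψ : ℝ → ℝ)
    (ρ : (Fin l₁ → ℝ) → (Fin n₁ → ℝ) → Fin n₂ → ℝ) (ζ : Fin n₁ → ℝ)
    (κ : Fin l₁ → ℝ) (C : Fin n₃ → Fin n₂ → ℝ) (d : Fin n₃ → ℝ) :
    Fin n₃ → Fin n₃ → ℝ :=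
  fun k i => if k = i then deriv ψ (preact ρ ζ κ C d i) else 0

/-- The κ-partial gradient (∂/∂κ)χ(μ) = Ψ′_λ(ρ_κ(ζ))·∇ρ_κ(ζ). -/
noncomputable def gradChiKappa {n₁ n₂ n₃ l₁ : ℕ} (ψ : ℝ → ℝ)
    (ρ : (Fin l₁ → ℝ) → (Fin n₁ → ℝ) → Fin n₂ → ℝ)
    (J : (Fin l₁ → ℝ) → Fin n₂ → Fin l₁ → ℝ) (ζ : Fin n₁ → ℝ)
    (κ : Fin l₁ → ℝ) (C : Fin n₃ → Fin n₂ → ℝ) (d : Fin n₃ → ℝ) :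
    Fin n₃ → Fin l₁ → ℝ :=
  fun k a => ∑ j, (deriv ψ (preact ρ ζ κ C d k) * C k j) * J κ j a

lemma vnorm_nonneg' {n : ℕ} (v : Fin n → ℝ) : 0 ≤ vnorm v := Real.sqrt_nonneg _

lemma mnorm_nonneg' {m n : ℕ} (A : Fin m → Fin n → ℝ) : 0 ≤ mnorm A := Real.sqrt_nonneg _

lemma vnorm_sq' {n : ℕ} (v : Fin n → ℝ) : vnorm v ^ 2 = ∑ i, (v i) ^ 2 :=
  Real.sq_sqrt (Finset.sum_nonneg fun _ _ => sq_nonneg _)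

lemma mnorm_sq' {m n : ℕ} (A : Fin m → Fin n → ℝ) : mnorm A ^ 2 = ∑ i, ∑ j, (A i j) ^ 2 :=
  Real.sq_sqrt (Finset.sum_nonneg fun _ _ => Finset.sum_nonneg fun _ _ => sq_nonneg _)

section
attribute [local instance] Matrix.frobeniusNormedAddCommGroup

lemma mnorm_eq_frob {m n : ℕ} (A : Matrix (Fin m) (Fin n) ℝ) : mnorm A = ‖A‖ := by
  change Real.sqrt (∑ i, ∑ j, (A i j) ^ 2) = _
  rw [Matrix.frobenius_norm_def, Real.sqrt_eq_rpow]
  simp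

lemma mnorm_add_le' {m n : ℕ} (A B : Fin m → Fin n → ℝ) :
    mnorm (A + B) ≤ mnorm A + mnorm B := by
  have h := norm_add_le (Matrix.of A) (Matrix.of B)
  rw [← mnorm_eq_frob, ← mnorm_eq_frob, ← mnorm_eq_frob] at h
  exact h

lemma mnorm_mul_le' {m n l : ℕ} (A : Fin m → Fin n → ℝ) (B : Fin n → Fin l → ℝ) :
    mnorm (fun k a => ∑ j, A k j * B j a) ≤ mnorm A * mnorm B := by
  have h := Matrix.frobenius_norm_mul (Matrix.of A) (Matrix.of B)
  rw [← mnorm_eq_frob, ← mnorm_eq_frob, ← mnorm_eq_frob] at h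
  exact h
end

lemma le_of_sq_le_sq_aux {a b : ℝ} (h : a ^ 2 ≤ b ^ 2) (hb : 0 ≤ b) : a ≤ b :=
  (abs_le_of_sq_le_sq' h hb).2

lemma mnorm_diag_le {m n : ℕ} (s : Fin m → ℝ) (A : Fin m → Fin n → ℝ) (c : ℝ) (hc : 0 ≤ c)
    (h : ∀ i, |s i| ≤ c) : mnorm (fun i j => s i * A i j) ≤ c * mnorm A := by
  refine le_of_sq_le_sq_aux ?_ (mul_nonneg hc (mnorm_nonneg' _))
  rw [mul_pow, mnorm_sq', mnorm_sq', Finset.mul_sum]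
  refine Finset.sum_le_sum fun i _ => ?_
  rw [Finset.mul_sum]
  refine Finset.sum_le_sum fun j _ => ?_
  rw [mul_pow]
  exact mul_le_mul_of_nonneg_right (sq_le_sq' (abs_le.1 (h i)).1 (abs_le.1 (h i)).2) (sq_nonneg _)

lemma cs_aff {y z P Q : ℝ} (hP : 0 ≤ P) (hQ : 0 ≤ Q) (h : y ^ 2 ≤ P * Q) :
    (y + z) ^ 2 ≤ (Q + 1) * (P + z ^ 2) := by
  have h2 : 2 * (y * z) ≤ Q * z ^ 2 + P := by
    refine (abs_le_of_sq_le_sq' ?_ (by positivity)).2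
    have := mul_le_mul_of_nonneg_right h (sq_nonneg z)
    nlinarith [sq_nonneg (Q * z ^ 2 - P)]
  nlinarith

lemma three_sq (a b c : ℝ) : (a + b + c) ^ 2 ≤ 3 * (a ^ 2 + b ^ 2 + c ^ 2) := by
  nlinarith [sq_nonneg (a - b), sq_nonneg (b - c), sq_nonneg (a - c)]

lemma cs_two (a b t δ : ℝ) : (a * t + b * δ) ^ 2 ≤ (a ^ 2 + b ^ 2) * (t ^ 2 + δ ^ 2) := by
  nlinarith [sq_nonneg (a * δ - b * t)]

lemma deriv_lip (ψ : ℝ → ℝ) (c₂ : ℝ) (hψ' : Differentiable ℝ (deriv ψ))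
    (hc₂ : ∀ x, |deriv (deriv ψ) x| ≤ c₂) (x y : ℝ) :
    |deriv ψ x - deriv ψ y| ≤ c₂ * |x - y| := by
  have := Convex.norm_image_sub_le_of_norm_deriv_le (f := deriv ψ) (s := Set.univ) (C := c₂)
    (x := y) (y := x) (fun z _ => hψ' z) (fun z _ => hc₂ z) convex_univ trivial trivial
  simpa using this

/-- the full gradient ∇χ = ((∂/∂κ)χ, (∂/∂λ)χ) is Lipschitz in μ = (κ, λ)
with constant √(m₁ + m₂). -/
theorem statement4 {n₁ n₂ n₃ l₁ : ℕ} (ψ : ℝ → ℝ) (c₁ c₂ : ℝ)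
    (hψ : Differentiable ℝ ψ) (hψ' : Differentiable ℝ (deriv ψ))
    (hc₁ : ∀ x, |deriv ψ x| ≤ c₁) (hc₂ : ∀ x, |deriv (deriv ψ) x| ≤ c₂)
    (𝒦 : Set (Fin l₁ → ℝ))
    (ρ : (Fin l₁ → ℝ) → (Fin n₁ → ℝ) → Fin n₂ → ℝ)
    (J : (Fin l₁ → ℝ) → Fin n₂ → Fin l₁ → ℝ) (ζ : Fin n₁ → ℝ)
    (hJ : ∀ κ ∈ 𝒦, HasFDerivAt (fun κ' => ρ κ' ζ)
      (Matrix.mulVecLin (Matrix.of (J κ))).toContinuousLinearMap κ)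
    (D L₁ L₂ B₁ B₂ : ℝ)
    (hρLip : ∀ κ ∈ 𝒦, ∀ κ' ∈ 𝒦, vnorm (ρ κ ζ - ρ κ' ζ) ≤ L₁ * vnorm (κ - κ'))
    (hJLip : ∀ κ ∈ 𝒦, ∀ κ' ∈ 𝒦, mnorm (J κ - J κ') ≤ L₂ * vnorm (κ - κ'))
    (hρB : ∀ κ ∈ 𝒦, vnorm (ρ κ ζ) ≤ B₁)
    (hJB : ∀ κ ∈ 𝒦, mnorm (J κ) ≤ B₂) :
    ∀ κ ∈ 𝒦, ∀ κ' ∈ 𝒦, ∀ (C C' : Fin n₃ → Fin n₂ → ℝ) (d d' : Fin n₃ → ℝ),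
      Real.sqrt ((mnorm C) ^ 2 + (vnorm d) ^ 2) < D →
      Real.sqrt ((mnorm C') ^ 2 + (vnorm d') ^ 2) < D →
      Real.sqrt
        ((mnorm (gradChiKappa ψ ρ J ζ κ C d - gradChiKappa ψ ρ J ζ κ' C' d')) ^ 2
          + (∑ k, ∑ i, ∑ j, (gradChiC ψ ρ ζ κ C d k i j - gradChiC ψ ρ ζ κ' C' d' k i j) ^ 2)
          + (∑ k, ∑ i, (gradChiD ψ ρ ζ κ C d k i - gradChiD ψ ρ ζ κ' C' d' k i) ^ 2))
        ≤ Real.sqrt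
            ((max (3 * L₁ ^ 2 * (c₁ ^ 2 * (n₃ : ℝ) + c₂ ^ 2 * D ^ 2 * B₁ ^ 2)
                    + 2 * c₂ ^ 2 * D ^ 2 * L₁ ^ 2)
                  (c₂ ^ 2 * (B₁ ^ 2 + 1) * (3 * B₁ ^ 2 + 2)))
              + (((n₃ : ℝ) * c₁ * D * L₂ + B₂ * c₂ * D ^ 2 * L₁) ^ 2
                  + B₂ ^ 2 * ((n₃ : ℝ) * c₁ + D * c₂ * Real.sqrt (B₁ ^ 2 + 1)) ^ 2)) *
          Real.sqrt ((vnorm (κ - κ')) ^ 2 + (mnorm (C - C')) ^ 2 + (vnorm (d - d')) ^ 2) := by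
  intro κ hκ κ' hκ' C C' d d' hD hD'
  have hc1 : 0 ≤ c₁ := (abs_nonneg _).trans (hc₁ 0)
  have hc2 : 0 ≤ c₂ := (abs_nonneg _).trans (hc₂ 0)
  have hD0 : 0 ≤ D := (Real.sqrt_nonneg _).trans hD.le
  have hB1 : 0 ≤ B₁ := (vnorm_nonneg' _).trans (hρB κ hκ)
  have hB2 : 0 ≤ B₂ := (mnorm_nonneg' _).trans (hJB κ hκ)
  have hCD : mnorm C ≤ D := by
    refine le_trans ?_ hD.le
    apply Real.le_sqrt_of_sq_le
    nlinarith [sq_nonneg (vnorm d)]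
  have hCD' : mnorm C' ≤ D := by
    refine le_trans ?_ hD'.le
    apply Real.le_sqrt_of_sq_le
    nlinarith [sq_nonneg (vnorm d')]
  have hE := hρLip κ hκ κ' hκ'
  have hF := hJLip κ hκ κ' hκ'
  have hE0 := (vnorm_nonneg' _).trans hE
  have hF0 := (mnorm_nonneg' _).trans hF
  have hxB := hρB κ' hκ'
  have hJB' := hJB κ' hκ'
  set T := vnorm (κ - κ') with hT
  set x := ρ κ ζ with hx
  set x' := ρ κ' ζ with hx'
  set δ := Real.sqrt ((mnorm (C - C')) ^ 2 + (vnorm (d - d')) ^ 2) with hδ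
  have hδ0 : 0 ≤ δ := Real.sqrt_nonneg _
  have hδ2 : δ ^ 2 = (mnorm (C - C')) ^ 2 + (vnorm (d - d')) ^ 2 := Real.sq_sqrt (by positivity)
  have hδC : mnorm (C - C') ≤ δ := by
    apply Real.le_sqrt_of_sq_le
    nlinarith [sq_nonneg (vnorm (d - d'))]
  set R := Real.sqrt (B₁ ^ 2 + 1) with hR
  have hR0 : 0 ≤ R := Real.sqrt_nonneg _
  have hR2 : R ^ 2 = B₁ ^ 2 + 1 := Real.sq_sqrt (by positivity)
  set s : Fin n₃ → ℝ := fun i => deriv ψ (preact ρ ζ κ C d i) with hs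
  set s' : Fin n₃ → ℝ := fun i => deriv ψ (preact ρ ζ κ' C' d' i) with hs'
  obtain ⟨u, hu⟩ : ∃ u : Fin n₃ → ℝ, ∀ i, u i = ∑ j, C i j * (x - x') j := ⟨_, fun _ => rfl⟩
  obtain ⟨w, hw⟩ : ∃ w : Fin n₃ → ℝ, ∀ i, w i = ∑ j, (C - C') i j * x' j + (d - d') i :=
    ⟨_, fun _ => rfl⟩
  have hs1 : ∀ i, |s i| ≤ c₁ := fun i => hc₁ _
  have hds : ∀ i, |s i - s' i| ≤ c₂ * (|u i| + |w i|) := by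
    intro i
    refine (deriv_lip ψ c₂ hψ' hc₂ _ _).trans (mul_le_mul_of_nonneg_left ?_ hc2)
    have : preact ρ ζ κ C d i - preact ρ ζ κ' C' d' i = u i + w i := by
      rw [hu, hw]
      simp only [preact, Pi.sub_apply, mul_sub, sub_mul, Finset.sum_sub_distrib, ← hx, ← hx']
      ring
    rw [this]
    exact abs_add_le _ _
  have hxe : ∑ j, (x j - x' j) ^ 2 ≤ (L₁ * T) ^ 2 := by
    have := vnorm_sq' (x - x')
    simp only [Pi.sub_apply] at this
    rw [← this]
    exact pow_le_pow_left₀ (vnorm_nonneg' _) hE 2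
  have hx2 : ∑ j, (x' j) ^ 2 ≤ B₁ ^ 2 := by
    rw [← vnorm_sq']
    exact pow_le_pow_left₀ (vnorm_nonneg' _) hxB 2
  have hU : ∑ i, u i ^ 2 ≤ D ^ 2 * (L₁ * T) ^ 2 := by
    calc ∑ i, u i ^ 2 ≤ ∑ i, (∑ j, C i j ^ 2) * (L₁ * T) ^ 2 := by
          refine Finset.sum_le_sum fun i _ => ?_
          rw [hu]
          refine (Finset.sum_mul_sq_le_sq_mul_sq _ _ _).trans ?_
          exact mul_le_mul_of_nonneg_left hxe (Finset.sum_nonneg fun _ _ => sq_nonneg _)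
      _ = mnorm C ^ 2 * (L₁ * T) ^ 2 := by rw [mnorm_sq', Finset.sum_mul]
      _ ≤ _ := mul_le_mul_of_nonneg_right
          (pow_le_pow_left₀ (mnorm_nonneg' _) hCD 2) (sq_nonneg _)
  have hW : ∑ i, w i ^ 2 ≤ R ^ 2 * δ ^ 2 := by
    calc ∑ i, w i ^ 2 ≤ ∑ i, R ^ 2 * (∑ j, (C - C') i j ^ 2 + (d - d') i ^ 2) := by
          refine Finset.sum_le_sum fun i _ => ?_
          rw [hw, hR2]
          have h1 : (∑ j, (C - C') i j * x' j) ^ 2 ≤ (∑ j, (C - C') i j ^ 2) * B₁ ^ 2 :=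
            (Finset.sum_mul_sq_le_sq_mul_sq _ _ _).trans
              (mul_le_mul_of_nonneg_left hx2 (Finset.sum_nonneg fun _ _ => sq_nonneg _))
          exact cs_aff (Finset.sum_nonneg fun _ _ => sq_nonneg _) (sq_nonneg _) h1
      _ = _ := by rw [hδ2, mnorm_sq', vnorm_sq', ← Finset.mul_sum, Finset.sum_add_distrib]
  -- the derivative with respect to d
  have hGD : (∑ k, ∑ i, (gradChiD ψ ρ ζ κ C d k i - gradChiD ψ ρ ζ κ' C' d' k i) ^ 2)
      ≤ 2 * c₂ ^ 2 * (D ^ 2 * (L₁ * T) ^ 2 + R ^ 2 * δ ^ 2) := by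
    calc _ = ∑ k, (s k - s' k) ^ 2 := by
          refine Finset.sum_congr rfl fun k _ => ?_
          rw [Finset.sum_eq_single k]
          · simp [gradChiD, hs, hs']
          · intro i _ hi
            simp [gradChiD, hi.symm]
          · simp
      _ ≤ ∑ k, 2 * c₂ ^ 2 * (u k ^ 2 + w k ^ 2) := by
          refine Finset.sum_le_sum fun k _ => ?_
          have h1 := pow_le_pow_left₀ (abs_nonneg _) (hds k) 2
          rw [sq_abs] at h1
          refine h1.trans ?_
          rw [mul_pow, ← sq_abs (u k), ← sq_abs (w k)]
          nlinarith [mul_nonneg (sq_nonneg c₂) (sq_nonneg (|u k| - |w k|))]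
      _ = 2 * c₂ ^ 2 * (∑ k, u k ^ 2 + ∑ k, w k ^ 2) := by
          rw [← Finset.mul_sum, Finset.sum_add_distrib]
      _ ≤ _ := by gcongr
  -- the derivative with respect to C
  have hGC : (∑ k, ∑ i, ∑ j, (gradChiC ψ ρ ζ κ C d k i j - gradChiC ψ ρ ζ κ' C' d' k i j) ^ 2)
      ≤ 3 * (n₃ * (c₁ ^ 2 * (L₁ * T) ^ 2)
        + c₂ ^ 2 * (D ^ 2 * (L₁ * T) ^ 2 + R ^ 2 * δ ^ 2) * B₁ ^ 2) := by
    calc _ = ∑ k, ∑ j, (s k * x j - s' k * x' j) ^ 2 := by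
          refine Finset.sum_congr rfl fun k _ => ?_
          rw [Finset.sum_eq_single k]
          · simp [gradChiC, hs, hs', hx, hx']
          · intro i _ hi
            simp [gradChiC, hi.symm]
          · simp
      _ ≤ ∑ k, ∑ j, 3 * (c₁ ^ 2 * (x j - x' j) ^ 2
            + c₂ ^ 2 * (u k ^ 2 + w k ^ 2) * x' j ^ 2) := by
          refine Finset.sum_le_sum fun k _ => Finset.sum_le_sum fun j _ => ?_
          have h1 : |s k * x j - s' k * x' j| ≤ c₁ * |x j - x' j| + c₂ * |u k| * |x' j|
              + c₂ * |w k| * |x' j| := by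
            have : s k * x j - s' k * x' j = s k * (x j - x' j) + (s k - s' k) * x' j := by ring
            rw [this]
            refine (abs_add_le _ _).trans ?_
            rw [abs_mul, abs_mul]
            have h2 := mul_le_mul_of_nonneg_right (hs1 k) (abs_nonneg (x j - x' j))
            have h3 := mul_le_mul_of_nonneg_right (hds k) (abs_nonneg (x' j))
            linarith
          have h2 := (pow_le_pow_left₀ (abs_nonneg _) h1 2).trans (three_sq _ _ _)
          simp only [mul_pow, sq_abs] at h2
          linarith
      _ = ∑ k, 3 * (c₁ ^ 2 * ∑ j, (x j - x' j) ^ 2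
            + c₂ ^ 2 * (u k ^ 2 + w k ^ 2) * ∑ j, x' j ^ 2) := by
          simp only [Finset.mul_sum, ← Finset.sum_add_distrib]
      _ ≤ ∑ k, 3 * (c₁ ^ 2 * (L₁ * T) ^ 2 + c₂ ^ 2 * (u k ^ 2 + w k ^ 2) * B₁ ^ 2) := by
          refine Finset.sum_le_sum fun k _ => ?_
          gcongr
      _ = 3 * (n₃ * (c₁ ^ 2 * (L₁ * T) ^ 2)
            + c₂ ^ 2 * (∑ k, u k ^ 2 + ∑ k, w k ^ 2) * B₁ ^ 2) := by
          rw [← Finset.mul_sum, Finset.sum_add_distrib, Finset.sum_const, ← Finset.sum_mul,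
            ← Finset.mul_sum, Finset.sum_add_distrib]
          simp
      _ ≤ _ := by gcongr
  -- the derivative with respect to κ
  have hsup : ∀ k, |s k - s' k| ≤ c₂ * (D * (L₁ * T) + R * δ) := by
    intro k
    refine (hds k).trans (mul_le_mul_of_nonneg_left (add_le_add ?_ ?_) hc2)
    · refine le_of_sq_le_sq_aux ?_ (mul_nonneg hD0 hE0)
      rw [sq_abs, mul_pow]
      exact (Finset.single_le_sum (f := fun i => u i ^ 2) (fun _ _ => sq_nonneg _)
        (Finset.mem_univ k)).trans hU
    · refine le_of_sq_le_sq_aux ?_ (mul_nonneg hR0 hδ0)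
      rw [sq_abs, mul_pow]
      exact (Finset.single_le_sum (f := fun i => w i ^ 2) (fun _ _ => sq_nonneg _)
        (Finset.mem_univ k)).trans hW
  have hGK : mnorm (gradChiKappa ψ ρ J ζ κ C d - gradChiKappa ψ ρ J ζ κ' C' d')
      ≤ ((n₃ : ℝ) * c₁ * D * L₂ + B₂ * c₂ * D ^ 2 * L₁) * T
        + (B₂ * ((n₃ : ℝ) * c₁ + D * c₂ * R)) * δ := by
    have hsplit : gradChiKappa ψ ρ J ζ κ C d - gradChiKappa ψ ρ J ζ κ' C' d'
        = ((fun k a => ∑ j, (s k * C k j) * (J κ - J κ') j a)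
          + (fun k a => ∑ j, (s k * (C - C') k j) * J κ' j a))
          + (fun k a => ∑ j, ((s k - s' k) * C' k j) * J κ' j a) := by
      funext k a
      simp only [gradChiKappa, Pi.sub_apply, Pi.add_apply, ← Finset.sum_add_distrib,
        ← Finset.sum_sub_distrib]
      refine Finset.sum_congr rfl fun j _ => ?_
      simp only [hs, hs']
      ring
    have h1 : mnorm (fun k a => ∑ j, (s k * C k j) * (J κ - J κ') j a)
        ≤ (c₁ * D) * (L₂ * T) := by
      refine (mnorm_mul_le' (fun k j => s k * C k j) _).trans
        (mul_le_mul ?_ hF (mnorm_nonneg' _) (by positivity))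
      exact (mnorm_diag_le s C c₁ hc1 hs1).trans (mul_le_mul_of_nonneg_left hCD hc1)
    have h2 : mnorm (fun k a => ∑ j, (s k * (C - C') k j) * J κ' j a)
        ≤ (c₁ * δ) * B₂ := by
      refine (mnorm_mul_le' (fun k j => s k * (C - C') k j) _).trans
        (mul_le_mul ?_ hJB' (mnorm_nonneg' _) (by positivity))
      exact (mnorm_diag_le s (C - C') c₁ hc1 hs1).trans (mul_le_mul_of_nonneg_left hδC hc1)
    have hc3 : 0 ≤ c₂ * (D * (L₁ * T) + R * δ) :=
      mul_nonneg hc2 (add_nonneg (mul_nonneg hD0 hE0) (mul_nonneg hR0 hδ0))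
    have h3 : mnorm (fun k a => ∑ j, ((s k - s' k) * C' k j) * J κ' j a)
        ≤ (c₂ * (D * (L₁ * T) + R * δ) * D) * B₂ := by
      refine (mnorm_mul_le' (fun k j => (s k - s' k) * C' k j) _).trans
        (mul_le_mul ?_ hJB' (mnorm_nonneg' _) (mul_nonneg hc3 hD0))
      exact (mnorm_diag_le (fun k => s k - s' k) C' _ hc3 hsup).trans
        (mul_le_mul_of_nonneg_left hCD' hc3)
    rcases Nat.eq_zero_or_pos n₃ with h0 | h0
    · have hz : mnorm (gradChiKappa ψ ρ J ζ κ C d - gradChiKappa ψ ρ J ζ κ' C' d') = 0 := by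
        subst h0
        simp [mnorm]
      have hz1 : 0 ≤ B₂ * D * (c₂ * (D * (L₁ * T) + R * δ)) := by positivity
      rw [hz]
      have : (n₃ : ℝ) = 0 := by exact_mod_cast h0
      rw [this]
      linarith
    · have hn : (1 : ℝ) ≤ n₃ := by exact_mod_cast h0
      rw [hsplit]
      refine (mnorm_add_le' _ _).trans ((add_le_add_left (mnorm_add_le' _ _) _).trans ?_)
      have h4 : 0 ≤ ((n₃ : ℝ) - 1) * (c₁ * D * (L₂ * T) + c₁ * δ * B₂) := by
        refine mul_nonneg (by linarith) (by positivity)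
      linarith
  have hGK2 := (pow_le_pow_left₀ (mnorm_nonneg' _) hGK 2).trans (cs_two _ _ _ _)
  rw [← Real.sqrt_mul (by positivity)]
  apply Real.sqrt_le_sqrt
  rw [add_assoc (T ^ 2), ← hδ2]
  set M := max (3 * L₁ ^ 2 * (c₁ ^ 2 * (n₃ : ℝ) + c₂ ^ 2 * D ^ 2 * B₁ ^ 2)
                    + 2 * c₂ ^ 2 * D ^ 2 * L₁ ^ 2)
                  (c₂ ^ 2 * (B₁ ^ 2 + 1) * (3 * B₁ ^ 2 + 2)) with hM
  have hM1 := mul_le_mul_of_nonneg_right (le_max_left _ _ : _ ≤ M) (sq_nonneg T)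
  have hM2 := mul_le_mul_of_nonneg_right (le_max_right _ _ : _ ≤ M) (sq_nonneg δ)
  rw [hR2] at hGC hGD
  linarith
end

section
/- (Theorem on Lipschitz constants of hidden layers.) Assume the parameter space Ω is non-empty, open and bounded: ‖Θ‖ < B_Ω for all Θ ∈ Ω. Fix an input ζ_x with S = ‖ζ_x‖. Then for every 1 ≤ u ≤ m, the layer map N_u and its gradient ∇N_u (with respect to the flattened parameters Θ_u) are Lipschitz continuous with constants L_{N_u} and L_{∇N_u}, and N_u is uniformly bounded by B_{N_u} = √ℓ_u·σ_max and ∇N_u by B_{∇N_u} = L_{N_u}, where the constants satisfy the recursion: L_{N₁} = σ′_max√(S² + 1), L_{∇N₁} = σ″_max√((S² + 1)(3S² + 2)); and for 2 ≤ u ≤ m: L_{N_u} = σ′_max√(B_Ω²L_{N_{u−1}}² + B_{N_{u−1}}² + 1), L_{∇N_u} = √(α_u + β_u) with α_u = max{ 3L_{N_{u−1}}²((σ′_max)²ℓ_u + (σ″_max)²B_Ω²B_{N_{u−1}}²) + 2(σ″_max)²B_Ω²L_{N_{u−1}}² , (σ″_max)²(B_{N_{u−1}}² + 1)(3B_{N_{u−1}}²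 + 2) } and β_u = (ℓ_uσ′_maxB_ΩL_{∇N_{u−1}} + σ″_maxB_Ω²L_{N_{u−1}}²)² + L_{N_{u−1}}²(ℓ_uσ′_max + B_Ωσ″_max(B_{N_{u−1}}² + 1)^{1/2})². -/
open scoped BigOperators

/-- Index set for the flattened parameters Θ_u = (θ₁,…,θ_u) of the first `u` layers:
layer `v+1` has a weight matrix A^{(v+1)} ∈ ℝ^{ℓ(v+1)×ℓ(v)} and a bias b^{(v+1)} ∈ ℝ^{ℓ(v+1)}. -/
abbrev ParamIndex (ℓ : ℕ → ℕ) (u : ℕ) :=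
  (v : Fin u) × ((Fin (ℓ (v.1 + 1)) × Fin (ℓ v.1)) ⊕ Fin (ℓ (v.1 + 1)))

/-- Flattened parameter space of the first `u` layers, carrying the Frobenius-type
(Euclidean) norm. -/
abbrev ParamSpace (ℓ : ℕ → ℕ) (u : ℕ) := EuclideanSpace ℝ (ParamIndex ℓ u)

/-- Truncation Θ_{u+1} ↦ Θ_u, forgetting the parameters of the last layer. -/
noncomputable def trunc {ℓ : ℕ → ℕ} {u : ℕ} (Θ : ParamSpace ℓ (u + 1)) : ParamSpace ℓ u :=
  (WithLp.equiv 2 _).symm fun p => Θ ⟨⟨p.1.1, Nat.lt_succ_of_lt p.1.2⟩, p.2⟩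

/-- The layer maps: `net ℓ σ ζ u Θ` is N_u(Θ_u) = σ_u(A^{(u)} N_{u−1}(Θ_{u−1}) + b^{(u)}),
with N_0 = ζ the fixed input; the activation σ_u is applied componentwise. -/
noncomputable def net (ℓ : ℕ → ℕ) (σ : ℕ → ℝ → ℝ) (ζ : Fin (ℓ 0) → ℝ) :
    (u : ℕ) → ParamSpace ℓ u → EuclideanSpace ℝ (Fin (ℓ u))
  | 0, _ => (WithLp.equiv 2 _).symm ζ
  | u + 1, Θ => (WithLp.equiv 2 _).symm fun i =>
      σ (u + 1) ((∑ j, Θ ⟨⟨u, Nat.lt_succ_self u⟩, Sum.inl (i, j)⟩ *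
        net ℓ σ ζ u (trunc Θ) j) + Θ ⟨⟨u, Nat.lt_succ_self u⟩, Sum.inr i⟩)

/-- The uniform bound B_{N_u} = √ℓ_u·σ_max. -/
noncomputable def BN (ℓ : ℕ → ℕ) (σmax : ℝ) (u : ℕ) : ℝ := Real.sqrt (ℓ u : ℝ) * σmax

/-- The recursive Lipschitz constants L_{N_u}: L_{N_1} = σ′_max√(S²+1),
L_{N_u} = σ′_max√(B_Ω²L_{N_{u−1}}² + B_{N_{u−1}}² + 1). -/
noncomputable def LN (ℓ : ℕ → ℕ) (σmax σ'max BΩ S : ℝ) : ℕ → ℝ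
  | 0 => 0
  | 1 => σ'max * Real.sqrt (S ^ 2 + 1)
  | u + 2 => σ'max * Real.sqrt (BΩ ^ 2 * (LN ℓ σmax σ'max BΩ S (u + 1)) ^ 2
      + (BN ℓ σmax (u + 1)) ^ 2 + 1)

/-- The recursive Lipschitz constants L_{∇N_u} of the gradients:
L_{∇N_1} = σ″_max√((S²+1)(3S²+2)), L_{∇N_u} = √(α_u + β_u). -/
noncomputable def LgN (ℓ : ℕ → ℕ) (σmax σ'max σ''max BΩ S : ℝ) : ℕ → ℝ
  | 0 => 0
  | 1 => σ''max * Real.sqrt ((S ^ 2 + 1) * (3 * S ^ 2 + 2))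
  | u + 2 =>
      Real.sqrt
        ((max (3 * (LN ℓ σmax σ'max BΩ S (u + 1)) ^ 2 *
                (σ'max ^ 2 * ((ℓ (u + 2) : ℝ)) + σ''max ^ 2 * BΩ ^ 2 * (BN ℓ σmax (u + 1)) ^ 2)
              + 2 * σ''max ^ 2 * BΩ ^ 2 * (LN ℓ σmax σ'max BΩ S (u + 1)) ^ 2)
          (σ''max ^ 2 * ((BN ℓ σmax (u + 1)) ^ 2 + 1) * (3 * (BN ℓ σmax (u + 1)) ^ 2 + 2)))
        + (((ℓ (u + 2) : ℝ) * σ'max * BΩ * LgN ℓ σmax σ'max σ''max BΩ S (u + 1)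
              + σ''max * BΩ ^ 2 * (LN ℓ σmax σ'max BΩ S (u + 1)) ^ 2) ^ 2
            + (LN ℓ σmax σ'max BΩ S (u + 1)) ^ 2 *
              ((ℓ (u + 2) : ℝ) * σ'max
                + BΩ * σ''max * Real.sqrt ((BN ℓ σmax (u + 1)) ^ 2 + 1)) ^ 2))


noncomputable def diagL {n : ℕ} (f : Fin n → ℝ) :
    EuclideanSpace ℝ (Fin n) →L[ℝ] EuclideanSpace ℝ (Fin n) :=
  LinearMap.toContinuousLinearMap
    { toFun := fun w => WithLp.toLp 2 fun i => f i * w i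
      map_add' := by intro x y; ext i; simp [mul_add]
      map_smul' := by intro c x; ext i; simp; ring }

lemma diagL_apply {n : ℕ} (f : Fin n → ℝ) (w : EuclideanSpace ℝ (Fin n)) (i : Fin n) :
    diagL f w i = f i * w i := rfl

lemma diagL_norm {n : ℕ} (f : Fin n → ℝ) (C : ℝ) (hC : 0 ≤ C) (hf : ∀ i, |f i| ≤ C)
    (w : EuclideanSpace ℝ (Fin n)) : ‖diagL f w‖ ≤ C * ‖w‖ := by
  refine abs_le_of_sq_le_sq' ?_ (by positivity) |>.2
  rw [mul_pow, EuclideanSpace.real_norm_sq_eq, EuclideanSpace.real_norm_sq_eq, Finset.mul_sum]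
  refine Finset.sum_le_sum fun i _ => ?_
  rw [diagL_apply, mul_pow]
  have := sq_le_sq' (abs_le.1 (hf i)).1 (abs_le.1 (hf i)).2
  gcongr

/-- Derivative of a componentwise activation. -/
lemma hasFDerivAt_act {n : ℕ} (s : ℝ → ℝ) (hs : Differentiable ℝ s)
    (z : EuclideanSpace ℝ (Fin n)) :
    HasFDerivAt (fun z : EuclideanSpace ℝ (Fin n) =>
      (WithLp.toLp 2 (fun i => s (z i)) : EuclideanSpace ℝ (Fin n)))
      (diagL fun i => deriv s (z i)) z := by
  rw [← hasFDerivWithinAt_univ, hasFDerivWithinAt_euclidean]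
  intro i
  have h1 : HasFDerivAt (fun z : EuclideanSpace ℝ (Fin n) => z i)
      (EuclideanSpace.proj i : EuclideanSpace ℝ (Fin n) →L[ℝ] ℝ) z :=
    (EuclideanSpace.proj i : EuclideanSpace ℝ (Fin n) →L[ℝ] ℝ).hasFDerivAt
  have h2 := (hs (z i)).hasDerivAt.comp_hasFDerivAt z h1
  rw [hasFDerivWithinAt_univ]
  refine h2.congr_fderiv ?_
  ext w
  simp [diagL_apply]

noncomputable def alph (k s1 s2 B b L : ℝ) : ℝ :=
  max (3 * L ^ 2 * (s1 ^ 2 * k + s2 ^ 2 * B ^ 2 * b ^ 2) + 2 * s2 ^ 2 * B ^ 2 * L ^ 2)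
    (s2 ^ 2 * (b ^ 2 + 1) * (3 * b ^ 2 + 2))

noncomputable def bet (k s1 s2 B b L Lg : ℝ) : ℝ :=
  (k * s1 * B * Lg + s2 * B ^ 2 * L ^ 2) ^ 2
    + L ^ 2 * (k * s1 + B * s2 * Real.sqrt (b ^ 2 + 1)) ^ 2

lemma aux_three (x y z : ℝ) : (x + y + z) ^ 2 ≤ 3 * (x ^ 2 + y ^ 2 + z ^ 2) := by
  nlinarith [sq_nonneg (x - y), sq_nonneg (x - z), sq_nonneg (y - z)]

lemma aux_two (w v p q : ℝ) :
    (w * p + v * q) ^ 2 ≤ (v ^ 2 + w ^ 2) * (p ^ 2 + q ^ 2) := by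
  nlinarith [sq_nonneg (w * q - v * p)]

lemma aux_cs (a d t X Y Z : ℝ) :
    (a * X + d * Y + t * Z) ^ 2 ≤ (X ^ 2 + Y ^ 2 + Z ^ 2) * (a ^ 2 + d ^ 2 + t ^ 2) := by
  nlinarith [sq_nonneg (a * Y - d * X), sq_nonneg (a * Z - t * X), sq_nonneg (d * Z - t * Y)]

set_option maxHeartbeats 1000000 in
lemma real_ineq (k s1 s2 B b L Lg pA pb q a d t : ℝ) (hk : 1 ≤ k) (hs1 : 0 ≤ s1) (hs2 : 0 ≤ s2)
    (hB : 0 ≤ B) (hb : 0 ≤ b) (hL : 0 ≤ L) (hLg : 0 ≤ Lg) (hpA : 0 ≤ pA) (hpb : 0 ≤ pb)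
    (hq : 0 ≤ q) (ha : 0 ≤ a) (hd : 0 ≤ d) (ht : 0 ≤ t) (P D : ℝ) (hP0 : 0 ≤ P) (hD0 : 0 ≤ D)
    (hP : pA ^ 2 + pb ^ 2 + q ^ 2 = P ^ 2) (hD : a ^ 2 + d ^ 2 + t ^ 2 = D ^ 2) :
    s2 * (b * pA + B * L * q + pb) * (b * a + d + B * L * t)
      + s1 * (a * (L * q) + (pA * L + B * (Lg * q)) * t)
      ≤ Real.sqrt (alph k s1 s2 B b L + bet k s1 s2 B b L Lg) * P * D := by
  set c := Real.sqrt (b ^ 2 + 1) with hc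
  have hc0 : 0 ≤ c := Real.sqrt_nonneg _
  have hc2 : c ^ 2 = b ^ 2 + 1 := Real.sq_sqrt (by positivity)
  set p := Real.sqrt (pA ^ 2 + pb ^ 2) with hp
  have hp0 : 0 ≤ p := Real.sqrt_nonneg _
  have hp2 : p ^ 2 = pA ^ 2 + pb ^ 2 := Real.sq_sqrt (by positivity)
  have hpAp : pA ≤ p := by
    rw [hp]; exact Real.le_sqrt_of_sq_le (by nlinarith)
  have hcs : b * pA + pb ≤ c * p := by
    refine (abs_le_of_sq_le_sq' ?_ (by positivity)).2
    rw [mul_pow, hc2, hp2]; nlinarith [sq_nonneg (b * pb - pA)]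
  set X := s2 * b * (c * p) + s2 * b * (B * L * q) + s1 * L * q with hX
  set Y := s2 * (c * p) + s2 * (B * L * q) with hY
  set Z := L * (k * s1 + B * s2 * c) * p + (k * s1 * B * Lg + s2 * B ^ 2 * L ^ 2) * q with hZ
  have hX0 : 0 ≤ X := by positivity
  have hY0 : 0 ≤ Y := by positivity
  have hZ0 : 0 ≤ Z := by positivity
  have hPp : p ^ 2 + q ^ 2 = P ^ 2 := by rw [hp2, hP]
  have h1 : s2 * (b * pA + B * L * q + pb) * (b * a + d + B * L * t)
      + s1 * (a * (L * q) + (pA * L + B * (Lg * q)) * t) ≤ a * X + d * Y + t * Z := by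
    have e1 : s2 * (b * pA + B * L * q + pb) * (b * a + d + B * L * t)
        ≤ s2 * (c * p + B * L * q) * (b * a + d + B * L * t) := by
      gcongr ?_ * _; gcongr s2 * ?_; linarith
    have e2 : s1 * (a * (L * q) + (pA * L + B * (Lg * q)) * t)
        ≤ s1 * (a * (L * q)) + (k * s1) * ((p * L + B * (Lg * q)) * t) := by
      have f1 : (pA * L + B * (Lg * q)) * t ≤ (p * L + B * (Lg * q)) * t := by gcongr
      have f2 : s1 ≤ k * s1 := by nlinarith
      have f3 : 0 ≤ (p * L + B * (Lg * q)) * t := by positivity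
      have := mul_le_mul_of_nonneg_left f1 hs1
      have := mul_le_mul_of_nonneg_right f2 f3
      linarith
    refine (add_le_add e1 e2).trans (le_of_eq ?_)
    rw [hX, hY, hZ]; ring
  have hXY : X ^ 2 + Y ^ 2 ≤ alph k s1 s2 B b L * P ^ 2 := by
    have g1 : X ^ 2 ≤ 3 * ((s2 * b * (c * p)) ^ 2 + (s2 * b * (B * L * q)) ^ 2 + (s1 * L * q) ^ 2) := by
      rw [hX]
      generalize s2 * b * (c * p) = x1
      generalize s2 * b * (B * L * q) = x2
      generalize s1 * L * q = x3
      exact aux_three x1 x2 x3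
    have g2 : Y ^ 2 ≤ 2 * ((s2 * (c * p)) ^ 2 + (s2 * (B * L * q)) ^ 2) := by
      rw [hY]
      generalize s2 * (c * p) = x1
      generalize s2 * (B * L * q) = x2
      linarith [sq_nonneg (x1 - x2), (by ring : (x1 - x2) ^ 2 + (x1 + x2) ^ 2 = 2 * (x1 ^ 2 + x2 ^ 2))]
    have m1 := le_max_left (3 * L ^ 2 * (s1 ^ 2 * k + s2 ^ 2 * B ^ 2 * b ^ 2)
      + 2 * s2 ^ 2 * B ^ 2 * L ^ 2) (s2 ^ 2 * (b ^ 2 + 1) * (3 * b ^ 2 + 2))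
    have m2 := le_max_right (3 * L ^ 2 * (s1 ^ 2 * k + s2 ^ 2 * B ^ 2 * b ^ 2)
      + 2 * s2 ^ 2 * B ^ 2 * L ^ 2) (s2 ^ 2 * (b ^ 2 + 1) * (3 * b ^ 2 + 2))
    change _ ≤ alph k s1 s2 B b L at m1 m2
    have n1 := mul_le_mul_of_nonneg_right m1 (sq_nonneg q)
    have n2 := mul_le_mul_of_nonneg_right m2 (sq_nonneg p)
    have n3 : (s1 * L * q) ^ 2 ≤ k * (s1 * L * q) ^ 2 :=
      le_mul_of_one_le_left (sq_nonneg _) hk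
    rw [← hPp]
    have e : 3 * ((s2 * b * (c * p)) ^ 2 + (s2 * b * (B * L * q)) ^ 2) +
      2 * ((s2 * (c * p)) ^ 2 + (s2 * (B * L * q)) ^ 2) =
      s2 ^ 2 * (b ^ 2 + 1) * (3 * b ^ 2 + 2) * p ^ 2 + (3 * L ^ 2 * (s2 ^ 2 * B ^ 2 * b ^ 2)
      + 2 * s2 ^ 2 * B ^ 2 * L ^ 2) * q ^ 2 := by
        simp only [mul_pow, hc2]; ring
    have e' : (3 * L ^ 2 * (s1 ^ 2 * k + s2 ^ 2 * B ^ 2 * b ^ 2)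
      + 2 * s2 ^ 2 * B ^ 2 * L ^ 2) * q ^ 2 = 3 * (k * (s1 * L * q) ^ 2)
      + (3 * L ^ 2 * (s2 ^ 2 * B ^ 2 * b ^ 2) + 2 * s2 ^ 2 * B ^ 2 * L ^ 2) * q ^ 2 := by ring
    rw [mul_add]
    linarith
  have hZZ : Z ^ 2 ≤ bet k s1 s2 B b L Lg * P ^ 2 := by
    rw [← hPp, hZ, bet, ← hc]
    generalize k * s1 * B * Lg + s2 * B ^ 2 * L ^ 2 = v
    rw [← mul_pow]
    generalize L * (k * s1 + B * s2 * c) = w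
    exact aux_two w v p q
  refine h1.trans ((abs_le_of_sq_le_sq' ?_ (by positivity)).2)
  have hab : 0 ≤ alph k s1 s2 B b L + bet k s1 s2 B b L Lg := by
    unfold alph bet
    have : 0 ≤ s2 ^ 2 * (b ^ 2 + 1) * (3 * b ^ 2 + 2) := by positivity
    have := this.trans (le_max_right (3 * L ^ 2 * (s1 ^ 2 * k + s2 ^ 2 * B ^ 2 * b ^ 2)
      + 2 * s2 ^ 2 * B ^ 2 * L ^ 2) _)
    positivity
  rw [mul_pow, mul_pow, Real.sq_sqrt hab]
  have hcs3 : (a * X + d * Y + t * Z) ^ 2 ≤ (X ^ 2 + Y ^ 2 + Z ^ 2) * (a ^ 2 + d ^ 2 + t ^ 2) := by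
    exact aux_cs a d t X Y Z
  rw [hD] at hcs3
  refine hcs3.trans ?_
  gcongr
  linarith

structure LayerInv {E F : Type*} [NormedAddCommGroup E] [NormedSpace ℝ E] [NormedAddCommGroup F]
    [NormedSpace ℝ F] (N : E → F) (B b L Lg : ℝ) : Prop where
  diff : Differentiable ℝ N
  bdd : ∀ x, ‖N x‖ ≤ b
  grad : ∀ x, ‖x‖ < B → ‖fderiv ℝ N x‖ ≤ L
  glip : ∀ x y, ‖x‖ < B → ‖y‖ < B → ‖fderiv ℝ N x - fderiv ℝ N y‖ ≤ Lg * ‖x - y‖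
  Lg0 : 0 ≤ Lg

lemma LayerInv.lip {E F : Type*} [NormedAddCommGroup E] [NormedSpace ℝ E] [NormedAddCommGroup F]
    [NormedSpace ℝ F] {N : E → F} {B b L Lg : ℝ} (h : LayerInv N B b L Lg) (x y : E)
    (hx : ‖x‖ < B) (hy : ‖y‖ < B) : ‖N x - N y‖ ≤ L * ‖x - y‖ :=
  (convex_ball (0 : E) B).norm_image_sub_le_of_norm_fderiv_le (𝕜 := ℝ)
    (fun z _ => h.diff z) (fun z hz => h.grad z (by simpa using hz)) (by simpa using hy)
    (by simpa using hx)

lemma LayerInv.step {E E' F : Type*} [NormedAddCommGroup E] [NormedSpace ℝ E]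
    [NormedAddCommGroup E'] [NormedSpace ℝ E'] [NormedAddCommGroup F]
    [NormedSpace ℝ F] {N : E → F} {B b L Lg : ℝ} (h : LayerInv N B b L Lg) (hB : 0 < B) {n : ℕ}
    (s : ℝ → ℝ) (s0 s1 s2 : ℝ) (hs : Differentiable ℝ s) (hs' : Differentiable ℝ (deriv s))
    (hb0 : ∀ x, |s x| ≤ s0) (hb1 : ∀ x, |deriv s x| ≤ s1) (hb2 : ∀ x, |deriv (deriv s) x| ≤ s2)
    (T : E' →L[ℝ] E) (A : E' →L[ℝ] F →L[ℝ] EuclideanSpace ℝ (Fin n))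
    (β : E' →L[ℝ] EuclideanSpace ℝ (Fin n)) (pA : E' → ℝ) (hpA : ∀ x, 0 ≤ pA x)
    (hA : ∀ x v, ‖A x v‖ ≤ pA x * ‖v‖)
    (hnorm : ∀ x, pA x ^ 2 + ‖β x‖ ^ 2 + ‖T x‖ ^ 2 = ‖x‖ ^ 2) :
    LayerInv (fun x => (WithLp.toLp 2 (fun i => s ((A x (N (T x)) + β x) i)) :
        EuclideanSpace ℝ (Fin n)))
      B (Real.sqrt n * s0) (s1 * Real.sqrt (B ^ 2 * L ^ 2 + b ^ 2 + 1))
      (Real.sqrt (alph n s1 s2 B b L + bet n s1 s2 B b L Lg)) := by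
  have hs0 : 0 ≤ s0 := (abs_nonneg _).trans (hb0 0)
  have hs1 : 0 ≤ s1 := (abs_nonneg _).trans (hb1 0)
  have hs2 : 0 ≤ s2 := (abs_nonneg _).trans (hb2 0)
  have hb : 0 ≤ b := (norm_nonneg _).trans (h.bdd 0)
  have hL : 0 ≤ L := (norm_nonneg _).trans (h.grad 0 (by simpa using hB))
  have hLg := h.Lg0
  have hpAle : ∀ x, pA x ≤ ‖x‖ := fun x =>
    (abs_le_of_sq_le_sq' (by nlinarith [hnorm x, sq_nonneg ‖β x‖, sq_nonneg ‖T x‖])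
      (norm_nonneg _)).2
  have hTle : ∀ x, ‖T x‖ ≤ ‖x‖ := fun x =>
    (abs_le_of_sq_le_sq' (by nlinarith [hnorm x, sq_nonneg ‖β x‖, sq_nonneg (pA x)])
      (norm_nonneg _)).2
  set z : E' → EuclideanSpace ℝ (Fin n) := fun x => A x (N (T x)) + β x with hz
  set W : E' → E' → EuclideanSpace ℝ (Fin n) := fun x v =>
    A v (N (T x)) + β v + A x (fderiv ℝ N (T x) (T v)) with hW
  have hzd : ∀ x, ∃ z' : E' →L[ℝ] EuclideanSpace ℝ (Fin n), HasFDerivAt z z' x ∧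
      ∀ v, z' v = W x v := by
    intro x
    have k1 : HasFDerivAt (fun x => N (T x)) ((fderiv ℝ N (T x)).comp T) x :=
      (h.diff (T x)).hasFDerivAt.comp x T.hasFDerivAt
    refine ⟨_, (A.hasFDerivAt.clm_apply k1).add β.hasFDerivAt, fun v => ?_⟩
    simp [hW]; abel
  have hNd : ∀ x, ∃ N' : E' →L[ℝ] EuclideanSpace ℝ (Fin n), HasFDerivAt
      (fun x => (WithLp.toLp 2 (fun i => s (z x i)) : EuclideanSpace ℝ (Fin n))) N' x ∧
      ∀ v, N' v = diagL (fun i => deriv s (z x i)) (W x v) := by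
    intro x
    obtain ⟨z', h1, h2⟩ := hzd x
    refine ⟨_, (hasFDerivAt_act s hs (z x)).comp x h1, fun v => ?_⟩
    simp [h2]
  have hfd : ∀ x v, fderiv ℝ
      (fun x => (WithLp.toLp 2 (fun i => s (z x i)) : EuclideanSpace ℝ (Fin n))) x v
      = diagL (fun i => deriv s (z x i)) (W x v) := by
    intro x v
    obtain ⟨N', h1, h2⟩ := hNd x
    rw [h1.fderiv, h2]
  have hWle : ∀ x v, ‖x‖ < B → ‖W x v‖ ≤ b * pA v + ‖β v‖ + B * L * ‖T v‖ := by
    intro x v hx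
    have hxT := (hTle x).trans_lt hx
    refine (norm_add₃_le).trans ?_
    have e1 : ‖A v (N (T x))‖ ≤ b * pA v := by
      refine (hA _ _).trans ?_
      rw [mul_comm]
      exact mul_le_mul_of_nonneg_right (h.bdd _) (hpA _)
    have e2 : ‖A x (fderiv ℝ N (T x) (T v))‖ ≤ B * (L * ‖T v‖) := by
      refine (hA _ _).trans ?_
      refine mul_le_mul ((hpAle x).trans hx.le) ?_ (norm_nonneg _) hB.le
      exact (ContinuousLinearMap.le_opNorm _ _).trans
        (mul_le_mul_of_nonneg_right (h.grad _ hxT) (norm_nonneg _))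
    linarith
  refine ⟨fun x => ?_, fun x => ?_, fun x hx => ?_, fun x y hx hy => ?_, Real.sqrt_nonneg _⟩
  · obtain ⟨N', h1, h2⟩ := hNd x
    exact h1.differentiableAt
  · refine (abs_le_of_sq_le_sq' ?_ (by positivity)).2
    rw [EuclideanSpace.real_norm_sq_eq, mul_pow, Real.sq_sqrt (by positivity)]
    refine (Finset.sum_le_sum (g := fun _ => s0 ^ 2) fun i _ => ?_).trans (by simp)
    exact sq_le_sq' (abs_le.1 (hb0 _)).1 (abs_le.1 (hb0 _)).2
  · refine ContinuousLinearMap.opNorm_le_bound _ (by positivity) fun v => ?_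
    rw [hfd]
    refine (diagL_norm _ s1 hs1 (fun i => hb1 _) _).trans ?_
    rw [mul_assoc]
    refine mul_le_mul_of_nonneg_left ?_ hs1
    refine (hWle x v hx).trans ?_
    refine (abs_le_of_sq_le_sq' ?_ (by positivity)).2
    rw [mul_pow, Real.sq_sqrt (by positivity), ← hnorm v, ← mul_pow]
    generalize B * L = w
    generalize pA v = a
    generalize ‖β v‖ = d
    generalize ‖T v‖ = t
    nlinarith [sq_nonneg (b * d - a), sq_nonneg (b * t - w * a), sq_nonneg (t - w * d)]
  · refine ContinuousLinearMap.opNorm_le_bound _ (by positivity) fun v => ?_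
    rw [ContinuousLinearMap.sub_apply, hfd, hfd]
    rcases Nat.eq_zero_or_pos n with hn | hn
    · subst hn
      rw [Subsingleton.elim (diagL _ _ - diagL _ _) (0 : EuclideanSpace ℝ (Fin 0)), norm_zero]
      positivity
    have hn1 : (1 : ℝ) ≤ n := by exact_mod_cast hn
    have hxT := (hTle x).trans_lt hx
    have hyT := (hTle y).trans_lt hy
    refine le_trans ?_ (real_ineq n s1 s2 B b L Lg (pA (x - y)) ‖β (x - y)‖ ‖T (x - y)‖ (pA v)
      ‖β v‖ ‖T v‖ hn1 hs1 hs2 hB.le hb hL hLg (hpA _) (norm_nonneg _) (norm_nonneg _) (hpA _)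
      (norm_nonneg _) (norm_nonneg _) ‖x - y‖ ‖v‖ (norm_nonneg _) (norm_nonneg _) (hnorm _)
      (hnorm _))
    have hpA0 := hpA (x - y)
    have hpAv := hpA v
    have hlipT : ‖N (T x) - N (T y)‖ ≤ L * ‖T (x - y)‖ := by
      rw [map_sub]; exact h.lip _ _ hxT hyT
    have hglT : ‖fderiv ℝ N (T x) - fderiv ℝ N (T y)‖ ≤ Lg * ‖T (x - y)‖ := by
      rw [map_sub]; exact h.glip _ _ hxT hyT
    have hzz : ‖z x - z y‖ ≤ b * pA (x - y) + B * L * ‖T (x - y)‖ + ‖β (x - y)‖ := by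
      have e : z x - z y = A (x - y) (N (T x)) + A y (N (T x) - N (T y)) + β (x - y) := by
        simp [hz]; abel
      rw [e]
      refine norm_add₃_le.trans ?_
      have e1 : ‖A (x - y) (N (T x))‖ ≤ b * pA (x - y) := by
        refine (hA _ _).trans ?_
        rw [mul_comm]
        exact mul_le_mul_of_nonneg_right (h.bdd _) (hpA _)
      have e2 : ‖A y (N (T x) - N (T y))‖ ≤ B * (L * ‖T (x - y)‖) := by
        refine (hA _ _).trans ?_
        exact mul_le_mul ((hpAle y).trans hy.le) hlipT (norm_nonneg _) hB.le
      linarith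
    have hWW : ‖W x v - W y v‖ ≤ pA v * (L * ‖T (x - y)‖)
        + (pA (x - y) * L + B * (Lg * ‖T (x - y)‖)) * ‖T v‖ := by
      have e : W x v - W y v = A v (N (T x) - N (T y)) + A (x - y) (fderiv ℝ N (T x) (T v))
          + A y ((fderiv ℝ N (T x) - fderiv ℝ N (T y)) (T v)) := by
        simp [hW]; abel
      rw [e]
      refine norm_add₃_le.trans ?_
      have e1 : ‖A v (N (T x) - N (T y))‖ ≤ pA v * (L * ‖T (x - y)‖) :=
        (hA _ _).trans (mul_le_mul_of_nonneg_left hlipT (hpA _))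
      have e2 : ‖A (x - y) (fderiv ℝ N (T x) (T v))‖ ≤ pA (x - y) * (L * ‖T v‖) := by
        refine (hA _ _).trans (mul_le_mul_of_nonneg_left ?_ (hpA _))
        exact (ContinuousLinearMap.le_opNorm _ _).trans
          (mul_le_mul_of_nonneg_right (h.grad _ hxT) (norm_nonneg _))
      have e3 : ‖A y ((fderiv ℝ N (T x) - fderiv ℝ N (T y)) (T v))‖
          ≤ B * ((Lg * ‖T (x - y)‖) * ‖T v‖) := by
        refine (hA _ _).trans ?_
        refine mul_le_mul ((hpAle y).trans hy.le) ?_ (norm_nonneg _) hB.le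
        exact (ContinuousLinearMap.le_opNorm _ _).trans
          (mul_le_mul_of_nonneg_right hglT (norm_nonneg _))
      linarith
    have hsplit : diagL (fun i => deriv s (z x i)) (W x v)
        - diagL (fun i => deriv s (z y i)) (W y v)
        = diagL (fun i => deriv s (z x i) - deriv s (z y i)) (W x v)
          + diagL (fun i => deriv s (z y i)) (W x v - W y v) := by
      ext i
      simp only [PiLp.add_apply, PiLp.sub_apply, diagL_apply]; ring
    rw [hsplit]
    refine (norm_add_le _ _).trans (add_le_add ?_ ?_)
    · refine (diagL_norm _ (s2 * ‖z x - z y‖) (by positivity) (fun i => ?_) _).trans ?_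
      · have e1 : ‖deriv s (z x i) - deriv s (z y i)‖ ≤ s2 * ‖z x i - z y i‖ :=
          convex_univ.norm_image_sub_le_of_norm_deriv_le (𝕜 := ℝ)
            (fun t _ => hs' t) (fun t _ => hb2 t) (Set.mem_univ _) (Set.mem_univ _)
        refine e1.trans (mul_le_mul_of_nonneg_left ?_ hs2)
        exact PiLp.norm_apply_le (z x - z y) i
      · refine mul_le_mul (mul_le_mul_of_nonneg_left hzz hs2) (hWle x v hx) (norm_nonneg _)
          (by positivity)
    · exact (diagL_norm _ s1 hs1 (fun i => hb1 _) _).trans (mul_le_mul_of_nonneg_left hWW hs1)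

noncomputable def truncL (ℓ : ℕ → ℕ) (u : ℕ) : ParamSpace ℓ (u + 1) →L[ℝ] ParamSpace ℓ u :=
  LinearMap.toContinuousLinearMap
    { toFun := trunc
      map_add' := by intro x y; ext i; simp [trunc]
      map_smul' := by intro c x; ext i; simp [trunc] }

noncomputable def biasL (ℓ : ℕ → ℕ) (u : ℕ) :
    ParamSpace ℓ (u + 1) →L[ℝ] EuclideanSpace ℝ (Fin (ℓ (u + 1))) :=
  LinearMap.toContinuousLinearMap
    { toFun := fun Θ => WithLp.toLp 2 fun i => Θ ⟨⟨u, Nat.lt_succ_self u⟩, Sum.inr i⟩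
      map_add' := by intro x y; ext i; simp
      map_smul' := by intro c x; ext i; simp }

noncomputable def wNorm (ℓ : ℕ → ℕ) (u : ℕ) (Θ : ParamSpace ℓ (u + 1)) : ℝ :=
  Real.sqrt (∑ i, ∑ j, (Θ ⟨⟨u, Nat.lt_succ_self u⟩, Sum.inl (i, j)⟩) ^ 2)

noncomputable def weightLM (ℓ : ℕ → ℕ) (u : ℕ) :
    ParamSpace ℓ (u + 1) →ₗ[ℝ] EuclideanSpace ℝ (Fin (ℓ u)) →ₗ[ℝ]
      EuclideanSpace ℝ (Fin (ℓ (u + 1))) :=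
  LinearMap.mk₂ ℝ (fun Θ v => WithLp.toLp 2 fun i =>
      ∑ j, Θ ⟨⟨u, Nat.lt_succ_self u⟩, Sum.inl (i, j)⟩ * v j)
    (by intro x y v; ext i; simp [add_mul, Finset.sum_add_distrib])
    (by intro c x v; ext i; simp [Finset.mul_sum, mul_assoc])
    (by intro x v w; ext i; simp [mul_add, Finset.sum_add_distrib])
    (by intro c x v; ext i; simp [Finset.mul_sum, mul_left_comm])

lemma weightLM_norm (ℓ : ℕ → ℕ) (u : ℕ) (Θ : ParamSpace ℓ (u + 1))
    (v : EuclideanSpace ℝ (Fin (ℓ u))) : ‖weightLM ℓ u Θ v‖ ≤ wNorm ℓ u Θ * ‖v‖ := by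
  have h0 : 0 ≤ wNorm ℓ u Θ := Real.sqrt_nonneg _
  refine (abs_le_of_sq_le_sq' ?_ (by positivity)).2
  rw [mul_pow, EuclideanSpace.real_norm_sq_eq, EuclideanSpace.real_norm_sq_eq, wNorm,
    Real.sq_sqrt (by positivity), Finset.sum_mul]
  exact Finset.sum_le_sum fun i _ => Finset.sum_mul_sq_le_sq_mul_sq Finset.univ
    (fun j => Θ ⟨⟨u, Nat.lt_succ_self u⟩, Sum.inl (i, j)⟩) (fun j => v j)

lemma param_norm (ℓ : ℕ → ℕ) (u : ℕ) (Θ : ParamSpace ℓ (u + 1)) :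
    wNorm ℓ u Θ ^ 2 + ‖biasL ℓ u Θ‖ ^ 2 + ‖truncL ℓ u Θ‖ ^ 2 = ‖Θ‖ ^ 2 := by
  rw [EuclideanSpace.real_norm_sq_eq, EuclideanSpace.real_norm_sq_eq,
    EuclideanSpace.real_norm_sq_eq, wNorm, Real.sq_sqrt (by positivity),
    Fintype.sum_sigma, Fintype.sum_sigma, Fin.sum_univ_castSucc, add_comm]
  congr 1
  rw [Fintype.sum_sum_type, Fintype.sum_prod_type]
  rfl

noncomputable def weightL (ℓ : ℕ → ℕ) (u : ℕ) :
    ParamSpace ℓ (u + 1) →L[ℝ] EuclideanSpace ℝ (Fin (ℓ u)) →L[ℝ]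
      EuclideanSpace ℝ (Fin (ℓ (u + 1))) :=
  LinearMap.mkContinuous₂ (weightLM ℓ u) 1 (by
    intro x v
    refine (weightLM_norm ℓ u x v).trans ?_
    rw [one_mul]
    refine mul_le_mul_of_nonneg_right ?_ (norm_nonneg _)
    refine (abs_le_of_sq_le_sq' ?_ (norm_nonneg _)).2
    nlinarith [param_norm ℓ u x, sq_nonneg ‖biasL ℓ u x‖, sq_nonneg ‖truncL ℓ u x‖])

lemma net_step (ℓ : ℕ → ℕ) (σ : ℕ → ℝ → ℝ) (s0 s1 s2 B : ℝ) (hB : 0 < B)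
    (hσd : ∀ u, Differentiable ℝ (σ u)) (hσd2 : ∀ u, Differentiable ℝ (deriv (σ u)))
    (hσb : ∀ u x, |σ u x| ≤ s0) (hσ' : ∀ u x, |deriv (σ u) x| ≤ s1)
    (hσ'' : ∀ u x, |deriv (deriv (σ u)) x| ≤ s2) (ζ : Fin (ℓ 0) → ℝ) (u : ℕ) (b L Lg : ℝ)
    (h : LayerInv (net ℓ σ ζ u) B b L Lg) :
    LayerInv (net ℓ σ ζ (u + 1)) B (BN ℓ s0 (u + 1)) (s1 * Real.sqrt (B ^ 2 * L ^ 2 + b ^ 2 + 1))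
      (Real.sqrt (alph (ℓ (u + 1)) s1 s2 B b L + bet (ℓ (u + 1)) s1 s2 B b L Lg)) :=
  h.step hB (σ (u + 1)) s0 s1 s2 (hσd _) (hσd2 _) (hσb _) (hσ' _) (hσ'' _) (truncL ℓ u)
    (weightL ℓ u) (biasL ℓ u) (wNorm ℓ u) (fun _ => Real.sqrt_nonneg _)
    (weightLM_norm ℓ u) (param_norm ℓ u)

/-- for every 1 ≤ u ≤ m the layer map N_u and its gradient ∇N_u are Lipschitz
continuous (on the parameter region ‖Θ‖ < B_Ω) with the recursively defined constants
L_{N_u}, L_{∇N_u}, N_u is uniformly bounded by B_{N_u} = √ℓ_u·σ_max, and ∇N_u is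
uniformly bounded by B_{∇N_u} = L_{N_u}. -/
theorem statement7 (m : ℕ) (ℓ : ℕ → ℕ) (σ : ℕ → ℝ → ℝ)
    (σmax σ'max σ''max BΩ : ℝ) (hBΩ : 0 < BΩ)
    (hσd : ∀ u, Differentiable ℝ (σ u)) (hσd2 : ∀ u, Differentiable ℝ (deriv (σ u)))
    (hσb : ∀ u x, |σ u x| ≤ σmax) (hσ' : ∀ u x, |deriv (σ u) x| ≤ σ'max)
    (hσ'' : ∀ u x, |deriv (deriv (σ u)) x| ≤ σ''max)
    (ζ : Fin (ℓ 0) → ℝ) (S : ℝ) (hS : S = Real.sqrt (∑ j, (ζ j) ^ 2)) :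
    ∀ u, 1 ≤ u → u ≤ m →
      (∀ Θ Θ' : ParamSpace ℓ u, ‖Θ‖ < BΩ → ‖Θ'‖ < BΩ →
        ‖net ℓ σ ζ u Θ - net ℓ σ ζ u Θ'‖ ≤ LN ℓ σmax σ'max BΩ S u * ‖Θ - Θ'‖) ∧
      (∀ Θ : ParamSpace ℓ u, ‖net ℓ σ ζ u Θ‖ ≤ BN ℓ σmax u) ∧
      (∀ Θ : ParamSpace ℓ u, ‖Θ‖ < BΩ →
        ‖fderiv ℝ (net ℓ σ ζ u) Θ‖ ≤ LN ℓ σmax σ'max BΩ S u) ∧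
      (∀ Θ Θ' : ParamSpace ℓ u, ‖Θ‖ < BΩ → ‖Θ'‖ < BΩ →
        ‖fderiv ℝ (net ℓ σ ζ u) Θ - fderiv ℝ (net ℓ σ ζ u) Θ'‖
          ≤ LgN ℓ σmax σ'max σ''max BΩ S u * ‖Θ - Θ'‖) := by
  have hs2 : 0 ≤ σ''max := (abs_nonneg _).trans (hσ'' 0 0)
  have key : ∀ u, LayerInv (net ℓ σ ζ (u + 1)) BΩ (BN ℓ σmax (u + 1))
      (LN ℓ σmax σ'max BΩ S (u + 1)) (LgN ℓ σmax σ'max σ''max BΩ S (u + 1)) := by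
    intro u
    induction u with
    | zero =>
      have h0 : LayerInv (net ℓ σ ζ 0) BΩ S 0 0 := by
        have hf : ∀ x, fderiv ℝ (net ℓ σ ζ 0) x = 0 := fun x =>
          (hasFDerivAt_const (WithLp.toLp 2 ζ : EuclideanSpace ℝ (Fin (ℓ 0))) x).fderiv
        refine ⟨fun x => differentiableAt_const (WithLp.toLp 2 ζ), fun x => ?_,
          fun x _ => by simp [hf], fun x y _ _ => by simp [hf], le_rfl⟩
        rw [hS, EuclideanSpace.norm_eq]
        simp [net]
      have h1 := net_step ℓ σ σmax σ'max σ''max BΩ hBΩ hσd hσd2 hσb hσ' hσ'' ζ 0 S 0 0 h0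
      convert h1 using 1
      · simp [LN]
      · have e : alph (ℓ (0 + 1)) σ'max σ''max BΩ S 0 + bet (ℓ (0 + 1)) σ'max σ''max BΩ S 0 0
            = σ''max ^ 2 * ((S ^ 2 + 1) * (3 * S ^ 2 + 2)) := by
          have : 0 ≤ σ''max ^ 2 * (S ^ 2 + 1) * (3 * S ^ 2 + 2) := by positivity
          simp [alph, bet, this, mul_assoc]
          positivity
        rw [e, Real.sqrt_mul (sq_nonneg _), Real.sqrt_sq hs2]
        rfl
    | succ u ih =>
      exact net_step ℓ σ σmax σ'max σ''max BΩ hBΩ hσd hσd2 hσb hσ' hσ'' ζ (u + 1) _ _ _ ih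
  intro u hu _
  obtain ⟨v, rfl⟩ : ∃ v, u = v + 1 := ⟨u - 1, by omega⟩
  exact ⟨(key v).lip, (key v).bdd, (key v).grad, (key v).glip⟩
end

section
/- (Theorem on the Lipschitz constant of the full network.) Assume the parameter space Ω is non-empty, open and bounded: ‖Θ‖ < B_Ω for all Θ ∈ Ω. Fix an input ζ_x with S = ‖ζ_x‖, and let L_{N_m}, L_{∇N_m}, B_{N_m} be the constants from the layerwise recursion for the m hidden layers. Then the full network map N(Θ) = f_{θ_{m+1}}(N_m(Θ_m)) and its gradient ∇N (with respect to all parameters Θ = Θ_{m+1}) are Lipschitz continuous on Ω with constants L_N = √(B_Ω²L_{N_m}² + B_{N_m}² + 1) and L_{∇N} = √(3L_{N_m}²ℓ_{m+1} + ℓ_{m+1}²B_Ω²L_{∇N_m}² + L_{N_m}²ℓ_{m+1}²), and ∇N is uniformly bounded by B_{∇N} = L_N. -/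
open scoped BigOperators

/-- The full network N(Θ_{m+1}) = f_{θ_{m+1}}(N_m(Θ_m)) = A^{(m+1)} N_m(Θ_m) + b^{(m+1)}. -/
noncomputable def netFull (ℓ : ℕ → ℕ) (σ : ℕ → ℝ → ℝ) (ζ : Fin (ℓ 0) → ℝ) (m : ℕ)
    (Θ : ParamSpace ℓ (m + 1)) : EuclideanSpace ℝ (Fin (ℓ (m + 1))) :=
  (WithLp.equiv 2 _).symm fun i =>
    (∑ j, Θ ⟨⟨m, Nat.lt_succ_self m⟩, Sum.inl (i, j)⟩ * net ℓ σ ζ m (trunc Θ) j) +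
      Θ ⟨⟨m, Nat.lt_succ_self m⟩, Sum.inr i⟩

namespace S8

lemma trunc_apply {ℓ : ℕ → ℕ} {u : ℕ} (Θ : ParamSpace ℓ (u + 1)) (p : ParamIndex ℓ u) :
    trunc Θ p = Θ ⟨⟨p.1.1, Nat.lt_succ_of_lt p.1.2⟩, p.2⟩ := rfl

/-- Truncation as a continuous linear map. -/
noncomputable def truncL (ℓ : ℕ → ℕ) (u : ℕ) : ParamSpace ℓ (u + 1) →L[ℝ] ParamSpace ℓ u :=
  LinearMap.toContinuousLinearMap
    { toFun := trunc
      map_add' := fun x y => by ext p; simp [trunc_apply]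
      map_smul' := fun c x => by ext p; simp [trunc_apply] }

lemma truncL_apply {ℓ : ℕ → ℕ} {u : ℕ} (Θ : ParamSpace ℓ (u + 1)) : truncL ℓ u Θ = trunc Θ := rfl

/-- The last weight matrix. -/
noncomputable def wA (ℓ : ℕ → ℕ) (u : ℕ) :
    ParamSpace ℓ (u + 1) →L[ℝ] EuclideanSpace ℝ (Fin (ℓ (u + 1)) × Fin (ℓ u)) :=
  LinearMap.toContinuousLinearMap
    { toFun := fun Θ => WithLp.toLp 2 fun p => Θ ⟨⟨u, Nat.lt_succ_self u⟩, Sum.inl p⟩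
      map_add' := fun x y => by ext p; simp
      map_smul' := fun c x => by ext p; simp }

lemma wA_apply {ℓ : ℕ → ℕ} {u : ℕ} (Θ : ParamSpace ℓ (u + 1)) (p) :
    wA ℓ u Θ p = Θ ⟨⟨u, Nat.lt_succ_self u⟩, Sum.inl p⟩ := rfl

/-- The last bias. -/
noncomputable def wb (ℓ : ℕ → ℕ) (u : ℕ) :
    ParamSpace ℓ (u + 1) →L[ℝ] EuclideanSpace ℝ (Fin (ℓ (u + 1))) :=
  LinearMap.toContinuousLinearMap
    { toFun := fun Θ => WithLp.toLp 2 fun p => Θ ⟨⟨u, Nat.lt_succ_self u⟩, Sum.inr p⟩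
      map_add' := fun x y => by ext p; simp
      map_smul' := fun c x => by ext p; simp }

lemma wb_apply {ℓ : ℕ → ℕ} {u : ℕ} (Θ : ParamSpace ℓ (u + 1)) (p) :
    wb ℓ u Θ p = Θ ⟨⟨u, Nat.lt_succ_self u⟩, Sum.inr p⟩ := rfl

lemma norm_split {ℓ : ℕ → ℕ} {u : ℕ} (Θ : ParamSpace ℓ (u + 1)) :
    ‖Θ‖ ^ 2 = ‖trunc Θ‖ ^ 2 + ‖wA ℓ u Θ‖ ^ 2 + ‖wb ℓ u Θ‖ ^ 2 := by
  simp only [EuclideanSpace.real_norm_sq_eq]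
  rw [Fintype.sum_sigma, Fin.sum_univ_castSucc, Fintype.sum_sigma, add_assoc]
  congr 1
  rw [Fintype.sum_sum_type]
  rfl

/-- Matrix-vector multiplication as a linear map. -/
noncomputable def mvL (a b : ℕ) : EuclideanSpace ℝ (Fin a × Fin b) →ₗ[ℝ] EuclideanSpace ℝ (Fin b) →ₗ[ℝ]
    EuclideanSpace ℝ (Fin a) :=
  LinearMap.mk₂ ℝ (fun M x => WithLp.toLp 2 fun i => ∑ j, M (i, j) * x j)
    (fun x y z => by ext i; simp [add_mul, Finset.sum_add_distrib])
    (fun c x y => by ext i; simp [Finset.mul_sum, mul_assoc])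
    (fun x y z => by ext i; simp [mul_add, Finset.sum_add_distrib])
    (fun c x y => by
      ext i; simp only [PiLp.smul_apply, smul_eq_mul, Finset.mul_sum]
      exact Finset.sum_congr rfl fun j _ => by ring)

lemma mvL_apply (a b : ℕ) (M x i) : mvL a b M x i = ∑ j, M (i, j) * x j := rfl

lemma mvL_norm (a b : ℕ) (M x) : ‖mvL a b M x‖ ≤ 1 * ‖M‖ * ‖x‖ := by
  rw [one_mul]
  refine abs_le_of_sq_le_sq' ?_ (by positivity) |>.2
  rw [mul_pow]
  simp only [EuclideanSpace.real_norm_sq_eq, mvL_apply]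
  rw [Fintype.sum_prod_type, Finset.sum_mul]
  exact Finset.sum_le_sum fun i _ => Finset.sum_mul_sq_le_sq_mul_sq _ _ _

/-- Matrix-vector multiplication as a continuous bilinear map. -/
noncomputable def mv (a b : ℕ) : EuclideanSpace ℝ (Fin a × Fin b) →L[ℝ] EuclideanSpace ℝ (Fin b) →L[ℝ]
    EuclideanSpace ℝ (Fin a) := (mvL a b).mkContinuous₂ 1 (mvL_norm a b)

lemma mv_norm (a b : ℕ) (M x) : ‖mv a b M x‖ ≤ ‖M‖ * ‖x‖ := by
  have h := mvL_norm a b M x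
  rw [one_mul] at h
  exact h

lemma netFull_eq (ℓ : ℕ → ℕ) (σ : ℕ → ℝ → ℝ) (ζ : Fin (ℓ 0) → ℝ) (u : ℕ) (Θ) :
    netFull ℓ σ ζ u Θ = mv _ _ (wA ℓ u Θ) (net ℓ σ ζ u (truncL ℓ u Θ)) + wb ℓ u Θ := rfl

lemma net_succ (ℓ : ℕ → ℕ) (σ : ℕ → ℝ → ℝ) (ζ : Fin (ℓ 0) → ℝ) (u : ℕ) (Θ) (i) :
    net ℓ σ ζ (u + 1) Θ i = σ (u + 1) (netFull ℓ σ ζ u Θ i) := rfl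

/-- The inductive facts about the hidden layers. -/
structure Good (ℓ : ℕ → ℕ) (σ : ℕ → ℝ → ℝ) (ζ : Fin (ℓ 0) → ℝ) (BΩ : ℝ) (u : ℕ) (B L G : ℝ) :
    Prop where
  B0 : 0 ≤ B
  L0 : 0 ≤ L
  G0 : 0 ≤ G
  diff : Differentiable ℝ (net ℓ σ ζ u)
  bd : ∀ Θ, ‖net ℓ σ ζ u Θ‖ ≤ B
  d : ∀ Θ, ‖Θ‖ < BΩ → ∀ H, ‖fderiv ℝ (net ℓ σ ζ u) Θ H‖ ≤ L * ‖H‖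
  lip : ∀ Θ Θ', ‖Θ‖ < BΩ → ‖Θ'‖ < BΩ → ‖net ℓ σ ζ u Θ - net ℓ σ ζ u Θ'‖ ≤ L * ‖Θ - Θ'‖
  dlip : ∀ Θ Θ', ‖Θ‖ < BΩ → ‖Θ'‖ < BΩ → ∀ H,
    ‖fderiv ℝ (net ℓ σ ζ u) Θ H - fderiv ℝ (net ℓ σ ζ u) Θ' H‖ ≤ G * ‖Θ - Θ'‖ * ‖H‖

section
variable {ℓ : ℕ → ℕ} {σ : ℕ → ℝ → ℝ} {ζ : Fin (ℓ 0) → ℝ} {BΩ : ℝ} {u : ℕ} {B L G : ℝ}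

lemma trunc_lt {Θ : ParamSpace ℓ (u + 1)} (h : ‖Θ‖ < BΩ) : ‖trunc Θ‖ < BΩ := by
  refine lt_of_le_of_lt (abs_le_of_sq_le_sq' ?_ (norm_nonneg _)).2 h
  rw [norm_split Θ]; nlinarith [sq_nonneg ‖wA ℓ u Θ‖, sq_nonneg ‖wb ℓ u Θ‖]

lemma wA_lt {Θ : ParamSpace ℓ (u + 1)} (h : ‖Θ‖ < BΩ) : ‖wA ℓ u Θ‖ ≤ BΩ := by
  refine le_trans (abs_le_of_sq_le_sq' ?_ (norm_nonneg _)).2 h.le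
  rw [norm_split Θ]; nlinarith [sq_nonneg ‖trunc Θ‖, sq_nonneg ‖wb ℓ u Θ‖]

lemma Good.hasF (g : Good ℓ σ ζ BΩ u B L G) (Θ : ParamSpace ℓ (u + 1)) :
    HasFDerivAt (netFull ℓ σ ζ u)
      (((mv _ _).precompR _ (wA ℓ u Θ) ((fderiv ℝ (net ℓ σ ζ u) (trunc Θ)).comp (truncL ℓ u)) +
        (mv _ _).precompL _ (wA ℓ u) (net ℓ σ ζ u (trunc Θ))) + wb ℓ u) Θ := by
  have h1 : HasFDerivAt (fun Θ => net ℓ σ ζ u (truncL ℓ u Θ))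
      ((fderiv ℝ (net ℓ σ ζ u) (trunc Θ)).comp (truncL ℓ u)) Θ :=
    ((g.diff (truncL ℓ u Θ)).hasFDerivAt).comp Θ (truncL ℓ u).hasFDerivAt
  exact ((mv _ _).hasFDerivAt_of_bilinear (wA ℓ u).hasFDerivAt h1).add (wb ℓ u).hasFDerivAt

lemma Good.fderivF (g : Good ℓ σ ζ BΩ u B L G) (Θ H : ParamSpace ℓ (u + 1)) :
    fderiv ℝ (netFull ℓ σ ζ u) Θ H = mv _ _ (wA ℓ u Θ) (fderiv ℝ (net ℓ σ ζ u) (trunc Θ) (trunc H))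
      + mv _ _ (wA ℓ u H) (net ℓ σ ζ u (trunc Θ)) + wb ℓ u H := by
  rw [(g.hasF Θ).fderiv]; rfl

lemma Good.diffF (g : Good ℓ σ ζ BΩ u B L G) : Differentiable ℝ (netFull ℓ σ ζ u) :=
  fun Θ => (g.hasF Θ).differentiableAt

lemma Good.dF (g : Good ℓ σ ζ BΩ u B L G) (Θ H : ParamSpace ℓ (u + 1)) (h : ‖Θ‖ < BΩ) :
    ‖fderiv ℝ (netFull ℓ σ ζ u) Θ H‖ ≤ BΩ * L * ‖trunc H‖ + B * ‖wA ℓ u H‖ + ‖wb ℓ u H‖ := by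
  rw [g.fderivF]
  refine (norm_add₃_le).trans ?_
  gcongr
  · refine (mv_norm _ _ _ _).trans ?_
    rw [mul_assoc]
    exact mul_le_mul (wA_lt h) (g.d _ (trunc_lt h) _) (norm_nonneg _) ((norm_nonneg _).trans h.le)
  · refine (mv_norm _ _ _ _).trans ?_
    rw [mul_comm]
    exact mul_le_mul_of_nonneg_right (g.bd _) (norm_nonneg _)

lemma trunc_sub (Θ Θ' : ParamSpace ℓ (u + 1)) : trunc Θ - trunc Θ' = trunc (Θ - Θ') :=
  ((truncL ℓ u).map_sub Θ Θ').symm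

lemma Good.lipF (g : Good ℓ σ ζ BΩ u B L G) (Θ Θ' : ParamSpace ℓ (u + 1)) (h : ‖Θ‖ < BΩ)
    (h' : ‖Θ'‖ < BΩ) :
    ‖netFull ℓ σ ζ u Θ - netFull ℓ σ ζ u Θ'‖ ≤
      BΩ * L * ‖trunc (Θ - Θ')‖ + B * ‖wA ℓ u (Θ - Θ')‖ + ‖wb ℓ u (Θ - Θ')‖ := by
  have e : netFull ℓ σ ζ u Θ - netFull ℓ σ ζ u Θ' =
      mv _ _ (wA ℓ u Θ) (net ℓ σ ζ u (trunc Θ) - net ℓ σ ζ u (trunc Θ'))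
      + mv _ _ (wA ℓ u (Θ - Θ')) (net ℓ σ ζ u (trunc Θ')) + wb ℓ u (Θ - Θ') := by
    simp only [netFull_eq, truncL_apply, map_sub, sub_apply]
    abel
  rw [e]
  refine (norm_add₃_le).trans ?_
  gcongr
  · refine (mv_norm _ _ _ _).trans ?_
    rw [mul_assoc]
    refine mul_le_mul (wA_lt h) ?_ (norm_nonneg _) ((norm_nonneg _).trans h.le)
    rw [← trunc_sub]
    exact g.lip _ _ (trunc_lt h) (trunc_lt h')
  · refine (mv_norm _ _ _ _).trans ?_
    rw [mul_comm]
    exact mul_le_mul_of_nonneg_right (g.bd _) (norm_nonneg _)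

lemma Good.dlipF (g : Good ℓ σ ζ BΩ u B L G) (Θ Θ' H : ParamSpace ℓ (u + 1)) (h : ‖Θ‖ < BΩ)
    (h' : ‖Θ'‖ < BΩ) :
    ‖fderiv ℝ (netFull ℓ σ ζ u) Θ H - fderiv ℝ (netFull ℓ σ ζ u) Θ' H‖ ≤
      BΩ * (G * ‖trunc (Θ - Θ')‖ * ‖trunc H‖) + ‖wA ℓ u (Θ - Θ')‖ * (L * ‖trunc H‖)
        + ‖wA ℓ u H‖ * (L * ‖trunc (Θ - Θ')‖) := by
  have e : fderiv ℝ (netFull ℓ σ ζ u) Θ H - fderiv ℝ (netFull ℓ σ ζ u) Θ' H =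
      mv _ _ (wA ℓ u Θ) (fderiv ℝ (net ℓ σ ζ u) (trunc Θ) (trunc H)
        - fderiv ℝ (net ℓ σ ζ u) (trunc Θ') (trunc H))
      + mv _ _ (wA ℓ u (Θ - Θ')) (fderiv ℝ (net ℓ σ ζ u) (trunc Θ') (trunc H))
      + mv _ _ (wA ℓ u H) (net ℓ σ ζ u (trunc Θ) - net ℓ σ ζ u (trunc Θ')) := by
    simp only [g.fderivF, map_sub, sub_apply]
    abel
  rw [e]
  refine (norm_add₃_le).trans ?_
  refine add_le_add (add_le_add ?_ ?_) ?_
  · refine (mv_norm _ _ _ _).trans ?_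
    refine mul_le_mul (wA_lt h) ?_ (norm_nonneg _) ((norm_nonneg _).trans h.le)
    rw [← trunc_sub]
    exact g.dlip _ _ (trunc_lt h) (trunc_lt h') _
  · refine (mv_norm _ _ _ _).trans ?_
    exact mul_le_mul_of_nonneg_left (g.d _ (trunc_lt h') _) (norm_nonneg _)
  · refine (mv_norm _ _ _ _).trans ?_
    rw [← trunc_sub Θ Θ']
    exact mul_le_mul_of_nonneg_left (g.lip _ _ (trunc_lt h) (trunc_lt h')) (norm_nonneg _)

/-- Cauchy-Schwarz with three terms. -/
lemma cs3 (a b c x y z K n : ℝ) (hK : 0 ≤ K) (hn : 0 ≤ n) (h1 : a ^ 2 + b ^ 2 + c ^ 2 ≤ K)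
    (h2 : n ^ 2 = x ^ 2 + y ^ 2 + z ^ 2) :
    a * x + b * y + c * z ≤ √K * n := by
  refine (abs_le_of_sq_le_sq' ?_ (by positivity)).2
  rw [mul_pow, Real.sq_sqrt hK, h2]
  have : (a * x + b * y + c * z) ^ 2 ≤ (a ^ 2 + b ^ 2 + c ^ 2) * (x ^ 2 + y ^ 2 + z ^ 2) := by
    nlinarith [sq_nonneg (a * y - b * x), sq_nonneg (a * z - c * x), sq_nonneg (b * z - c * y)]
  refine this.trans (mul_le_mul_of_nonneg_right h1 (by positivity))

lemma lin3 (H : ParamSpace ℓ (u + 1)) :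
    BΩ * L * ‖trunc H‖ + B * ‖wA ℓ u H‖ + ‖wb ℓ u H‖ ≤
      √(BΩ ^ 2 * L ^ 2 + B ^ 2 + 1) * ‖H‖ := by
  have := cs3 (BΩ * L) B 1 ‖trunc H‖ ‖wA ℓ u H‖ ‖wb ℓ u H‖ (BΩ ^ 2 * L ^ 2 + B ^ 2 + 1) ‖H‖
    (by positivity) (norm_nonneg _) (le_of_eq (by ring)) (norm_split H)
  linarith

lemma had_norm {n : ℕ} {c : ℝ} (hc : 0 ≤ c) (x y : EuclideanSpace ℝ (Fin n))
    (h : ∀ i, |x i| ≤ c * |y i|) : ‖x‖ ≤ c * ‖y‖ := by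
  refine (abs_le_of_sq_le_sq' ?_ (by positivity)).2
  rw [mul_pow]
  simp only [EuclideanSpace.real_norm_sq_eq, Finset.mul_sum]
  refine Finset.sum_le_sum fun i _ => ?_
  rw [← sq_abs (x i), ← sq_abs (y i), ← mul_pow]
  exact pow_le_pow_left₀ (abs_nonneg _) (h i) 2

lemma mvt {f : ℝ → ℝ} {c : ℝ} (hf : Differentiable ℝ f) (h : ∀ x, |deriv f x| ≤ c) (x y : ℝ) :
    |f x - f y| ≤ c * |x - y| := by
  have := convex_univ.norm_image_sub_le_of_norm_deriv_le (f := f) (C := c) (x := y) (y := x)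
    (fun z _ => hf z) (fun z _ => by simpa using h z) (Set.mem_univ _) (Set.mem_univ _)
  simpa using this

lemma coord_le {n : ℕ} (x : EuclideanSpace ℝ (Fin n)) (i) : |x i| ≤ ‖x‖ := by
  simpa using PiLp.norm_apply_le x i

set_option maxHeartbeats 1000000 in
/-- The scalar inequality behind the Lipschitz constant of the gradient of a hidden layer. -/
lemma key (s t W L G B l D d da db h ha hb δ η E : ℝ) (hs : 0 ≤ s) (ht : 0 ≤ t) (hW : 0 ≤ W)
    (hL : 0 ≤ L) (hG : 0 ≤ G) (hB : 0 ≤ B) (hl : 1 ≤ l) (hD : 0 ≤ D) (hda : 0 ≤ da)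
    (hh : 0 ≤ h) (hha : 0 ≤ ha) (hhb : 0 ≤ hb) (hδ : 0 ≤ δ) (hη : 0 ≤ η)
    (e1 : δ ^ 2 = D ^ 2 + da ^ 2 + db ^ 2) (e2 : η ^ 2 = h ^ 2 + ha ^ 2 + hb ^ 2)
    (hE0 : 0 ≤ E) (hE : E ≤ W * L * D + B * da + db) :
    s * (W * (G * D * h) + da * (L * h) + ha * (L * D)) + t * E * (W * L * h + B * ha + hb) ≤
    √(max (3 * L ^ 2 * (s ^ 2 * l + t ^ 2 * W ^ 2 * B ^ 2) + 2 * t ^ 2 * W ^ 2 * L ^ 2)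
        (t ^ 2 * (B ^ 2 + 1) * (3 * B ^ 2 + 2)) +
      ((l * s * W * G + t * W ^ 2 * L ^ 2) ^ 2 + L ^ 2 * (l * s + W * t * √(B ^ 2 + 1)) ^ 2))
      * δ * η := by
  obtain ⟨d, hd⟩ : ∃ d, d = √(da ^ 2 + db ^ 2) := ⟨_, rfl⟩
  obtain ⟨Q, hQ⟩ : ∃ Q, Q = √(B ^ 2 + 1) := ⟨_, rfl⟩
  have hd0 : 0 ≤ d := hd ▸ Real.sqrt_nonneg _
  have hQ0 : 0 ≤ Q := hQ ▸ Real.sqrt_nonneg _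
  have hd2 : d ^ 2 = da ^ 2 + db ^ 2 := by rw [hd, Real.sq_sqrt (by positivity)]
  have hQ2 : Q ^ 2 = B ^ 2 + 1 := by rw [hQ, Real.sq_sqrt (by positivity)]
  rw [← hQ]
  have hdad : da ≤ d := (abs_le_of_sq_le_sq' (by nlinarith [sq_nonneg db]) hd0).2
  have hlin : B * da + db ≤ Q * d := by
    refine (abs_le_of_sq_le_sq' ?_ (by positivity)).2
    rw [mul_pow, hQ2, hd2]; nlinarith [sq_nonneg (B * db - da)]
  have hE' : E ≤ W * L * D + Q * d := by linarith
  set X := 3 * L ^ 2 * (s ^ 2 * l + t ^ 2 * W ^ 2 * B ^ 2) + 2 * t ^ 2 * W ^ 2 * L ^ 2 with hX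
  set Y := t ^ 2 * (B ^ 2 + 1) * (3 * B ^ 2 + 2) with hY
  set b1 := l * s * W * G + t * W ^ 2 * L ^ 2 with hb1
  set b2 := l * s + W * t * Q with hb2
  have hY0 : 0 ≤ Y := by positivity
  have hM0 : 0 ≤ max X Y := hY0.trans (le_max_right _ _)
  have r1 : s * (W * (G * D * h) + da * (L * h) + ha * (L * D)) + t * E * (W * L * h + B * ha + hb)
      ≤ (b1 * D + L * b2 * d) * h + (s * L * D + t * B * (W * L * D + Q * d)) * ha
        + t * (W * L * D + Q * d) * hb := by
    have i1 : s * W * G * D * h ≤ l * (s * W * G * D * h) :=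
      le_mul_of_one_le_left (by positivity) hl
    have i2 : s * L * h * da ≤ l * (s * L * h * d) :=
      (mul_le_mul_of_nonneg_left hdad (by positivity)).trans
        (le_mul_of_one_le_left (by positivity) hl)
    have i3 : t * E * (W * L * h + B * ha + hb) ≤
        t * (W * L * D + Q * d) * (W * L * h + B * ha + hb) := by gcongr
    rw [hb1, hb2]
    linarith [i1, i2, i3]
  refine r1.trans ?_
  have hδ2 : δ ^ 2 = D ^ 2 + d ^ 2 := by rw [e1, hd2]; ring
  have q1 : (b1 * D + L * b2 * d) ^ 2 ≤ (b1 ^ 2 + L ^ 2 * b2 ^ 2) * δ ^ 2 := by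
    have c0 : ∀ x y z w : ℝ, (x * z + y * w) ^ 2 ≤ (x ^ 2 + y ^ 2) * (z ^ 2 + w ^ 2) :=
      fun x y z w => by nlinarith [sq_nonneg (x * w - y * z)]
    rw [hδ2, ← mul_pow]
    exact c0 _ _ _ _
  have q2 : (s * L * D + t * B * (W * L * D + Q * d)) ^ 2 + (t * (W * L * D + Q * d)) ^ 2 ≤
      max X Y * δ ^ 2 := by
    have j1 : (s * L * D + t * B * (W * L * D + Q * d)) ^ 2 + (t * (W * L * D + Q * d)) ^ 2 ≤
        X * D ^ 2 + Y * d ^ 2 := by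
      have c1 : (s * L * D + t * B * (W * L * D + Q * d)) ^ 2 ≤
          3 * ((s * L * D) ^ 2 + (t * B * (W * L * D)) ^ 2 + (t * B * Q * d) ^ 2) := by
        have c0 : ∀ x y z : ℝ, (x + (y + z)) ^ 2 ≤ 3 * (x ^ 2 + y ^ 2 + z ^ 2) := fun x y z => by
          nlinarith [sq_nonneg (x - y), sq_nonneg (x - z), sq_nonneg (y - z)]
        have c00 := c0 (s * L * D) (t * B * (W * L * D)) (t * B * Q * d)
        refine le_trans (le_of_eq ?_) c00
        ring
      have c2 : (t * (W * L * D + Q * d)) ^ 2 ≤ 2 * ((t * (W * L * D)) ^ 2 + (t * Q * d) ^ 2) := by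
        have c0 : ∀ x y : ℝ, (x + y) ^ 2 ≤ 2 * (x ^ 2 + y ^ 2) := fun x y => by
          nlinarith [sq_nonneg (x - y)]
        refine le_trans (le_of_eq ?_) (c0 (t * (W * L * D)) (t * Q * d))
        ring
      have c3 : 3 * (t * B * Q * d) ^ 2 + 2 * (t * Q * d) ^ 2 = Y * d ^ 2 := by
        rw [hY, ← hQ2]; ring
      have c4 : (s * L * D) ^ 2 ≤ l * (s * L * D) ^ 2 := le_mul_of_one_le_left (by positivity) hl
      have c5 : X * D ^ 2 = 3 * (l * (s * L * D) ^ 2) + 3 * (t * B * (W * L * D)) ^ 2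
          + 2 * (t * (W * L * D)) ^ 2 := by rw [hX]; ring
      linarith
    refine j1.trans ?_
    rw [hδ2, mul_add]
    gcongr
    · exact le_max_left _ _
    · exact le_max_right _ _
  have fin := cs3 (b1 * D + L * b2 * d) (s * L * D + t * B * (W * L * D + Q * d))
    (t * (W * L * D + Q * d)) h ha hb ((max X Y + (b1 ^ 2 + L ^ 2 * b2 ^ 2)) * δ ^ 2) η
    (by positivity) hη (by linarith) e2
  rwa [Real.sqrt_mul (by positivity), Real.sqrt_sq hδ] at fin

/-- One step of the layerwise recursion. -/
lemma Good.step (g : Good ℓ σ ζ BΩ u B L G) {σmax s t : ℝ} (hW : 0 < BΩ)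
    (hσd : ∀ u, Differentiable ℝ (σ u)) (hσd2 : ∀ u, Differentiable ℝ (deriv (σ u)))
    (hσb : ∀ u x, |σ u x| ≤ σmax) (hσ' : ∀ u x, |deriv (σ u) x| ≤ s)
    (hσ'' : ∀ u x, |deriv (deriv (σ u)) x| ≤ t) :
    Good ℓ σ ζ BΩ (u + 1) (BN ℓ σmax (u + 1)) (s * √(BΩ ^ 2 * L ^ 2 + B ^ 2 + 1))
      √(max (3 * L ^ 2 * (s ^ 2 * (ℓ (u + 1)) + t ^ 2 * BΩ ^ 2 * B ^ 2)
          + 2 * t ^ 2 * BΩ ^ 2 * L ^ 2)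
        (t ^ 2 * (B ^ 2 + 1) * (3 * B ^ 2 + 2)) +
      (((ℓ (u + 1)) * s * BΩ * G + t * BΩ ^ 2 * L ^ 2) ^ 2
        + L ^ 2 * ((ℓ (u + 1)) * s + BΩ * t * √(B ^ 2 + 1)) ^ 2)) := by
  have hm0 : 0 ≤ σmax := (abs_nonneg _).trans (hσb 0 0)
  have hs : 0 ≤ s := (abs_nonneg _).trans (hσ' 0 0)
  have ht : 0 ≤ t := (abs_nonneg _).trans (hσ'' 0 0)
  have hdiff : Differentiable ℝ (net ℓ σ ζ (u + 1)) := by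
    rw [differentiable_euclidean]
    intro i
    have := (differentiable_euclidean.1 g.diffF) i
    exact (hσd (u + 1)).comp this
  have hfd : ∀ Θ H i, fderiv ℝ (net ℓ σ ζ (u + 1)) Θ H i =
      deriv (σ (u + 1)) (netFull ℓ σ ζ u Θ i) * fderiv ℝ (netFull ℓ σ ζ u) Θ H i := by
    intro Θ H i
    have a1 : HasFDerivAt (fun Θ => net ℓ σ ζ (u + 1) Θ i)
        ((EuclideanSpace.proj i : EuclideanSpace ℝ (Fin (ℓ (u + 1))) →L[ℝ] ℝ).comp
          (fderiv ℝ (net ℓ σ ζ (u + 1)) Θ)) Θ :=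
      (EuclideanSpace.proj i : EuclideanSpace ℝ (Fin (ℓ (u + 1))) →L[ℝ] ℝ).hasFDerivAt.comp Θ
        (hdiff Θ).hasFDerivAt
    have a2 : HasFDerivAt (fun Θ => netFull ℓ σ ζ u Θ i)
        ((EuclideanSpace.proj i : EuclideanSpace ℝ (Fin (ℓ (u + 1))) →L[ℝ] ℝ).comp
          (fderiv ℝ (netFull ℓ σ ζ u) Θ)) Θ :=
      (EuclideanSpace.proj i : EuclideanSpace ℝ (Fin (ℓ (u + 1))) →L[ℝ] ℝ).hasFDerivAt.comp Θ
        (g.diffF Θ).hasFDerivAt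
    have a3 := ((hσd (u + 1)) (netFull ℓ σ ζ u Θ i)).hasDerivAt.comp_hasFDerivAt Θ a2
    have a4 := a1.unique a3
    exact congrArg (fun f => f H) a4
  refine ⟨by unfold BN; positivity, by positivity, by positivity, hdiff, ?_, ?_, ?_, ?_⟩
  · intro Θ
    refine (abs_le_of_sq_le_sq' ?_ (by unfold BN; positivity)).2
    rw [BN, mul_pow, Real.sq_sqrt (by positivity), EuclideanSpace.real_norm_sq_eq]
    have : ∀ i ∈ Finset.univ, (net ℓ σ ζ (u + 1) Θ i) ^ 2 ≤ σmax ^ 2 := fun i _ => by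
      rw [net_succ, ← sq_abs]
      exact pow_le_pow_left₀ (abs_nonneg _) (hσb _ _) 2
    simpa using Finset.sum_le_sum this
  · intro Θ h H
    rw [mul_assoc]
    refine (had_norm hs _ (fderiv ℝ (netFull ℓ σ ζ u) Θ H) fun i => ?_).trans
      (mul_le_mul_of_nonneg_left ((g.dF Θ H h).trans (lin3 H)) hs)
    rw [hfd, abs_mul]
    exact mul_le_mul_of_nonneg_right (hσ' _ _) (abs_nonneg _)
  · intro Θ Θ' h h'
    rw [mul_assoc]
    refine (had_norm hs _ (netFull ℓ σ ζ u Θ - netFull ℓ σ ζ u Θ') fun i => ?_).trans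
      (mul_le_mul_of_nonneg_left ((g.lipF Θ Θ' h h').trans (lin3 _)) hs)
    exact mvt (hσd _) (hσ' _) _ _
  · intro Θ Θ' h h' H
    rcases Nat.eq_zero_or_pos (ℓ (u + 1)) with h0 | hpos
    · have : ‖fderiv ℝ (net ℓ σ ζ (u + 1)) Θ H - fderiv ℝ (net ℓ σ ζ (u + 1)) Θ' H‖ = 0 := by
        rw [norm_eq_zero]
        ext i
        exact absurd i.2 (by omega)
      rw [this]; positivity
    have hl : (1 : ℝ) ≤ ℓ (u + 1) := by exact_mod_cast hpos
    refine le_trans ?_ (key s t BΩ L G B (ℓ (u + 1)) ‖trunc (Θ - Θ')‖ 0 ‖wA ℓ u (Θ - Θ')‖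
      ‖wb ℓ u (Θ - Θ')‖ ‖trunc H‖ ‖wA ℓ u H‖ ‖wb ℓ u H‖ ‖Θ - Θ'‖ ‖H‖
      ‖netFull ℓ σ ζ u Θ - netFull ℓ σ ζ u Θ'‖ hs ht hW.le g.L0 g.G0 g.B0 hl (norm_nonneg _)
      (norm_nonneg _) (norm_nonneg _) (norm_nonneg _) (norm_nonneg _) (norm_nonneg _)
      (norm_nonneg _) (norm_split _) (norm_split _) (norm_nonneg _) (g.lipF Θ Θ' h h'))
    let x : EuclideanSpace ℝ (Fin (ℓ (u + 1))) := WithLp.toLp 2 fun i =>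
      deriv (σ (u + 1)) (netFull ℓ σ ζ u Θ i) *
        (fderiv ℝ (netFull ℓ σ ζ u) Θ H - fderiv ℝ (netFull ℓ σ ζ u) Θ' H) i
    let y : EuclideanSpace ℝ (Fin (ℓ (u + 1))) := WithLp.toLp 2 fun i =>
      (deriv (σ (u + 1)) (netFull ℓ σ ζ u Θ i) - deriv (σ (u + 1)) (netFull ℓ σ ζ u Θ' i)) *
        (fderiv ℝ (netFull ℓ σ ζ u) Θ' H) i
    have e : fderiv ℝ (net ℓ σ ζ (u + 1)) Θ H - fderiv ℝ (net ℓ σ ζ (u + 1)) Θ' H = x + y := by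
      ext i
      simp only [PiLp.sub_apply, PiLp.add_apply, hfd, x, y]
      ring
    rw [e]
    refine (norm_add_le _ _).trans (add_le_add ?_ ?_)
    · refine (had_norm hs x (fderiv ℝ (netFull ℓ σ ζ u) Θ H - fderiv ℝ (netFull ℓ σ ζ u) Θ' H)
        fun i => ?_).trans (mul_le_mul_of_nonneg_left (g.dlipF Θ Θ' H h h') hs)
      simp only [x, abs_mul]
      exact mul_le_mul_of_nonneg_right (hσ' _ _) (abs_nonneg _)
    · refine (had_norm (mul_nonneg ht (norm_nonneg _)) y (fderiv ℝ (netFull ℓ σ ζ u) Θ' H)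
        fun i => ?_).trans (mul_le_mul_of_nonneg_left (g.dF Θ' H h')
          (mul_nonneg ht (norm_nonneg _)))
      simp only [y, abs_mul]
      refine mul_le_mul_of_nonneg_right ((mvt (hσd2 _) (hσ'' _) _ _).trans ?_) (abs_nonneg _)
      exact mul_le_mul_of_nonneg_left
        (coord_le (netFull ℓ σ ζ u Θ - netFull ℓ σ ζ u Θ') i) ht

lemma good_zero (S : ℝ) (hS : S = Real.sqrt (∑ j, (ζ j) ^ 2)) :
    Good ℓ σ ζ BΩ 0 S 0 0 := by
  have hc : net ℓ σ ζ 0 = fun _ => WithLp.toLp 2 ζ := rfl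
  refine ⟨hS ▸ Real.sqrt_nonneg _, le_rfl, le_rfl, ?_, ?_, ?_, ?_, ?_⟩
  · rw [hc]; exact differentiable_const _
  · intro Θ
    rw [hc, hS, EuclideanSpace.norm_eq]
    simp
  · intro Θ _ H
    simp [hc]
  · intro Θ Θ' _ _
    simp [hc]
  · intro Θ Θ' _ _ H
    simp [hc]

lemma good_all {σmax s t S : ℝ} (hW : 0 < BΩ)
    (hσd : ∀ u, Differentiable ℝ (σ u)) (hσd2 : ∀ u, Differentiable ℝ (deriv (σ u)))
    (hσb : ∀ u x, |σ u x| ≤ σmax) (hσ' : ∀ u x, |deriv (σ u) x| ≤ s)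
    (hσ'' : ∀ u x, |deriv (deriv (σ u)) x| ≤ t) (hS : S = Real.sqrt (∑ j, (ζ j) ^ 2)) (u : ℕ) :
    Good ℓ σ ζ BΩ (u + 1) (BN ℓ σmax (u + 1)) (LN ℓ σmax s BΩ S (u + 1))
      (LgN ℓ σmax s t BΩ S (u + 1)) := by
  have ht : 0 ≤ t := (abs_nonneg _).trans (hσ'' 0 0)
  induction u with
  | zero =>
    have h := (good_zero (ℓ := ℓ) (σ := σ) (BΩ := BΩ) S hS).step hW hσd hσd2 hσb hσ' hσ''
    convert h using 1
    · simp [LN]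
    · simp only [LgN]
      have e : (0:ℝ) ≤ t ^ 2 * (S ^ 2 + 1) * (3 * S ^ 2 + 2) := by positivity
      simp only [ne_eq, OfNat.ofNat_ne_zero, not_false_eq_true, zero_pow, mul_zero, zero_mul,
        add_zero, zero_add]
      rw [max_eq_right e, mul_assoc, Real.sqrt_mul (sq_nonneg t), Real.sqrt_sq ht]
  | succ u ih => exact ih.step hW hσd hσd2 hσb hσ' hσ''

end

end S8

/-- the full network map N and its gradient ∇N are Lipschitz continuous on
{‖Θ‖ < B_Ω} with constants L_N = √(B_Ω²L_{N_m}² + B_{N_m}² + 1) and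
L_{∇N} = √(3L_{N_m}²ℓ_{m+1} + ℓ_{m+1}²B_Ω²L_{∇N_m}² + L_{N_m}²ℓ_{m+1}²), and ∇N is
uniformly bounded by B_{∇N} = L_N. -/
theorem statement8 (m : ℕ) (hm : 1 ≤ m) (ℓ : ℕ → ℕ) (σ : ℕ → ℝ → ℝ)
    (σmax σ'max σ''max BΩ : ℝ) (hBΩ : 0 < BΩ)
    (hσd : ∀ u, Differentiable ℝ (σ u)) (hσd2 : ∀ u, Differentiable ℝ (deriv (σ u)))
    (hσb : ∀ u x, |σ u x| ≤ σmax) (hσ' : ∀ u x, |deriv (σ u) x| ≤ σ'max)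
    (hσ'' : ∀ u x, |deriv (deriv (σ u)) x| ≤ σ''max)
    (ζ : Fin (ℓ 0) → ℝ) (S : ℝ) (hS : S = Real.sqrt (∑ j, (ζ j) ^ 2)) :
    (∀ Θ Θ' : ParamSpace ℓ (m + 1), ‖Θ‖ < BΩ → ‖Θ'‖ < BΩ →
      ‖netFull ℓ σ ζ m Θ - netFull ℓ σ ζ m Θ'‖
        ≤ Real.sqrt (BΩ ^ 2 * (LN ℓ σmax σ'max BΩ S m) ^ 2 + (BN ℓ σmax m) ^ 2 + 1) *
          ‖Θ - Θ'‖) ∧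
    (∀ Θ : ParamSpace ℓ (m + 1), ‖Θ‖ < BΩ →
      ‖fderiv ℝ (netFull ℓ σ ζ m) Θ‖
        ≤ Real.sqrt (BΩ ^ 2 * (LN ℓ σmax σ'max BΩ S m) ^ 2 + (BN ℓ σmax m) ^ 2 + 1)) ∧
    (∀ Θ Θ' : ParamSpace ℓ (m + 1), ‖Θ‖ < BΩ → ‖Θ'‖ < BΩ →
      ‖fderiv ℝ (netFull ℓ σ ζ m) Θ - fderiv ℝ (netFull ℓ σ ζ m) Θ'‖
        ≤ Real.sqrt (3 * (LN ℓ σmax σ'max BΩ S m) ^ 2 * (ℓ (m + 1) : ℝ)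
            + (ℓ (m + 1) : ℝ) ^ 2 * BΩ ^ 2 * (LgN ℓ σmax σ'max σ''max BΩ S m) ^ 2
            + (LN ℓ σmax σ'max BΩ S m) ^ 2 * (ℓ (m + 1) : ℝ) ^ 2) * ‖Θ - Θ'‖) := by
  obtain ⟨k, rfl⟩ : ∃ k, m = k + 1 := ⟨m - 1, by omega⟩
  have g := S8.good_all (ℓ := ℓ) (σ := σ) (BΩ := BΩ) hBΩ hσd hσd2 hσb hσ' hσ'' hS k
  refine ⟨fun Θ Θ' h h' => (g.lipF Θ Θ' h h').trans (S8.lin3 _), fun Θ h => ?_,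
    fun Θ Θ' h h' => ?_⟩
  · exact ContinuousLinearMap.opNorm_le_bound _ (Real.sqrt_nonneg _) fun H =>
      (g.dF Θ H h).trans (S8.lin3 H)
  · refine ContinuousLinearMap.opNorm_le_bound _ (by positivity) fun H => ?_
    rw [sub_apply]
    rcases Nat.eq_zero_or_pos (ℓ (k + 1 + 1)) with h0 | hpos
    · have : ‖fderiv ℝ (netFull ℓ σ ζ (k + 1)) Θ H - fderiv ℝ (netFull ℓ σ ζ (k + 1)) Θ' H‖ = 0 := by
        rw [norm_eq_zero]
        ext i
        exact absurd i.2 (by omega)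
      rw [this]; positivity
    have hl : (1 : ℝ) ≤ ℓ (k + 1 + 1) := by exact_mod_cast hpos
    refine (g.dlipF Θ Θ' H h h').trans ?_
    have n1 := S8.norm_split (Θ - Θ')
    have n2 := S8.norm_split H
    have hL := g.L0
    have hG := g.G0
    set L := LN ℓ σmax σ'max BΩ S (k + 1)
    set G := LgN ℓ σmax σ'max σ''max BΩ S (k + 1)
    set l : ℝ := (ℓ (k + 1 + 1) : ℝ)
    have fin := S8.cs3 (BΩ * G * ‖trunc (Θ - Θ')‖ + L * ‖S8.wA ℓ (k + 1) (Θ - Θ')‖)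
      (L * ‖trunc (Θ - Θ')‖) 0 ‖trunc H‖ ‖S8.wA ℓ (k + 1) H‖ ‖S8.wb ℓ (k + 1) H‖
      ((3 * L ^ 2 * l + l ^ 2 * BΩ ^ 2 * G ^ 2 + L ^ 2 * l ^ 2) * ‖Θ - Θ'‖ ^ 2) ‖H‖
      (by positivity) (norm_nonneg _) (by
        set D := ‖trunc (Θ - Θ')‖
        set a := ‖S8.wA ℓ (k + 1) (Θ - Θ')‖
        have i1 : (BΩ * G * D + L * a) ^ 2 ≤ ((BΩ * G) ^ 2 + L ^ 2) * ‖Θ - Θ'‖ ^ 2 := by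
          have : (BΩ * G * D + L * a) ^ 2 ≤ ((BΩ * G) ^ 2 + L ^ 2) * (D ^ 2 + a ^ 2) := by
            nlinarith [sq_nonneg (BΩ * G * a - L * D)]
          refine this.trans (mul_le_mul_of_nonneg_left ?_ (by positivity))
          rw [n1]; nlinarith [sq_nonneg ‖S8.wb ℓ (k + 1) (Θ - Θ')‖]
        have i2 : (L * D) ^ 2 ≤ L ^ 2 * ‖Θ - Θ'‖ ^ 2 := by
          rw [mul_pow]
          refine mul_le_mul_of_nonneg_left ?_ (by positivity)
          rw [n1]; nlinarith [sq_nonneg ‖S8.wb ℓ (k + 1) (Θ - Θ')‖, sq_nonneg a]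
        have i3 : (BΩ * G) ^ 2 + L ^ 2 + L ^ 2 ≤
            3 * L ^ 2 * l + l ^ 2 * BΩ ^ 2 * G ^ 2 + L ^ 2 * l ^ 2 := by
          have l2 : 1 ≤ l ^ 2 := one_le_pow₀ hl
          have k1 : (BΩ * G) ^ 2 ≤ l ^ 2 * (BΩ * G) ^ 2 := le_mul_of_one_le_left (by positivity) l2
          have k2 : L ^ 2 ≤ l ^ 2 * L ^ 2 := le_mul_of_one_le_left (by positivity) l2
          have k3 : L ^ 2 ≤ l * L ^ 2 := le_mul_of_one_le_left (by positivity) hl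
          nlinarith [sq_nonneg L]
        have i4 := mul_le_mul_of_nonneg_right i3 (sq_nonneg ‖Θ - Θ'‖)
        nlinarith) n2
    rw [Real.sqrt_mul (by positivity), Real.sqrt_sq (norm_nonneg _)] at fin
    refine le_trans (le_of_eq ?_) fin
    ring
end
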